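/- Let R be a Cohen-Macaulay ring (i.e., R_p is a Cohen-Macaulay local ring for every prime p), X a resolving subcategory of mod R, and M a finitely generated R-module such that X is dominant on NF(M). Then the following are equivalent: (1) M belongs to X; (2) depth M_p ≥ min_{X∈X} depth X_p holds for all p ∈ NF(M). -/

import Mathlib

universe u

open CategoryTheory

namespace ResolvPaper

variable (R : Type u) [CommRing R]

/-- `IsSES f g` means `0 → A → B → C → 0` is a short exact sequence. -/
def IsSES {R : Type u} [CommRing R] {A B C : Type u} [AddCommGroup A] [Module R A]
    [AddCommGroup B] [Module R B] [AddCommGroup C] [Module R C]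
    (f : A →ₗ[R] B) (g : B →ₗ[R] C) : Prop :=
  Function.Injective f ∧ Function.Surjective g ∧ LinearMap.range f = LinearMap.ker g

/-- A resolving subcategory of `mod R`, viewed as a set of bundled modules
closed under isomorphism, containing the finitely generated projective modules, and closed
under direct summands, extensions and syzygies. -/
structure IsResolving (𝒳 : Set (ModuleCat.{u} R)) : Prop where
  fg : ∀ M ∈ 𝒳, Module.Finite R M
  iso_closed : ∀ M N : ModuleCat.{u} R, Nonempty (M ≃ₗ[R] N) → M ∈ 𝒳 → N ∈ 𝒳
  proj_mem : ∀ M : ModuleCat.{u} R, Module.Finite R M → Module.Projective R M → M ∈ 𝒳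
  summand_closed : ∀ M N : ModuleCat.{u} R, ModuleCat.of R (↥M × ↥N) ∈ 𝒳 → M ∈ 𝒳
  ext_closed : ∀ (A B C : ModuleCat.{u} R) (f : A →ₗ[R] B) (g : B →ₗ[R] C),
    IsSES f g → A ∈ 𝒳 → C ∈ 𝒳 → B ∈ 𝒳
  syzygy_closed : ∀ (K P M : ModuleCat.{u} R) (f : K →ₗ[R] P) (g : P →ₗ[R] M),
    IsSES f g → Module.Finite R K → Module.Finite R P → Module.Projective R P →
    M ∈ 𝒳 → K ∈ 𝒳

/-- The resolving closure: the smallest resolving subcategory containing `S`. -/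
def resClosure (S : Set (ModuleCat.{u} R)) : Set (ModuleCat.{u} R) :=
  ⋂₀ {𝒳 | IsResolving R 𝒳 ∧ S ⊆ 𝒳}

/-- An extension-closed subcategory of `mod R`: closed under isomorphism,
direct summands and extensions. -/
def IsExtClosed (𝒳 : Set (ModuleCat.{u} R)) : Prop :=
  (∀ M N : ModuleCat.{u} R, Nonempty (M ≃ₗ[R] N) → M ∈ 𝒳 → N ∈ 𝒳) ∧
  (∀ M N : ModuleCat.{u} R, ModuleCat.of R (↥M × ↥N) ∈ 𝒳 → M ∈ 𝒳) ∧
  (∀ (A B C : ModuleCat.{u} R) (f : A →ₗ[R] B) (g : B →ₗ[R] C),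
    IsSES f g → A ∈ 𝒳 → C ∈ 𝒳 → B ∈ 𝒳)

/-- The extension closure of a set of modules. -/
def extClosure (S : Set (ModuleCat.{u} R)) : Set (ModuleCat.{u} R) :=
  ⋂₀ {𝒳 | IsExtClosed R 𝒳 ∧ S ⊆ 𝒳}

/-- `add R`: direct summands of finite free modules. -/
def addR : Set (ModuleCat.{u} R) :=
  {M | ∃ (n : ℕ) (N : ModuleCat.{u} R), Nonempty ((↥M × ↥N) ≃ₗ[R] (Fin n → R))}

/-- `pdLE n M` : the projective dimension of `M` is at most `n`. -/
def pdLE : ℕ → ModuleCat.{u} R → Prop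
  | 0, M => Module.Projective R M
  | n+1, M => ∃ (K P : ModuleCat.{u} R) (f : K →ₗ[R] P) (g : P →ₗ[R] M),
      Module.Finite R P ∧ Module.Projective R P ∧ IsSES f g ∧ pdLE n K

/-- The projective dimension, an element of `WithBot ℕ∞`; the zero module
has projective dimension `⊥ = -∞`. -/
noncomputable def pdim (M : ModuleCat.{u} R) : WithBot ℕ∞ :=
  sInf {x : WithBot ℕ∞ | (x = ⊥ ∧ Subsingleton M) ∨ ∃ n : ℕ, x = (n : ℕ∞) ∧ pdLE R n M}

/-- The depth of `M` with respect to the ideal `I`: the supremum of lengths of weakly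
`M`-regular sequences contained in `I`.  The zero module has depth `∞`. -/
noncomputable def depthE (I : Ideal R) (M : Type u) [AddCommGroup M] [Module R M] : ℕ∞ :=
  sSup {x : ℕ∞ | ∃ rs : List R, (∀ r ∈ rs, r ∈ I) ∧
    RingTheory.Sequence.IsWeaklyRegular M rs ∧ x = rs.length}

/-- The grade of an ideal: the length of a maximal `R`-regular sequence in `I`. -/
noncomputable def gradeE (I : Ideal R) : ℕ∞ := depthE R I R

/-- A grade consistent function on `Spec R`. -/
def GradeConsistent (f : PrimeSpectrum R → ℕ) : Prop :=
  (∀ p : PrimeSpectrum R, (f p : ℕ∞) ≤ gradeE R p.asIdeal) ∧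
  (∀ p q : PrimeSpectrum R, p.asIdeal ≤ q.asIdeal → f p ≤ f q)

/-- The localization of a module at a prime, as a module over the local ring `R_p`. -/
noncomputable abbrev localizeM (p : PrimeSpectrum R) (M : ModuleCat.{u} R) :
    ModuleCat.{u} (Localization.AtPrime p.asIdeal) :=
  ModuleCat.of (Localization.AtPrime p.asIdeal) (LocalizedModule p.asIdeal.primeCompl M)

/-- `pd_{R_p} M_p`. -/
noncomputable def localPdim (p : PrimeSpectrum R) (M : ModuleCat.{u} R) : WithBot ℕ∞ :=
  pdim (Localization.AtPrime p.asIdeal) (localizeM R p M)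

/-- `depth_{R_p} M_p`. -/
noncomputable def localDepth (p : PrimeSpectrum R) (M : ModuleCat.{u} R) : ℕ∞ :=
  depthE (Localization.AtPrime p.asIdeal)
    (IsLocalRing.maximalIdeal (Localization.AtPrime p.asIdeal))
    (LocalizedModule p.asIdeal.primeCompl M)

/-- The height of a prime ideal. -/
noncomputable def heightE (p : PrimeSpectrum R) : ℕ∞ := Order.height p

/-- `PD(R)` : finitely generated modules of finite projective dimension. -/
def PDcat : Set (ModuleCat.{u} R) :=
  {M | Module.Finite R M ∧ ∃ n : ℕ, pdLE R n M}

/-- `MCM(R)` : maximal Cohen-Macaulay modules. -/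
def MCMcat : Set (ModuleCat.{u} R) :=
  {M | Module.Finite R M ∧ ∀ p : PrimeSpectrum R, heightE R p ≤ localDepth R p M}

/-- The nonfree locus of a module. -/
def NF (M : ModuleCat.{u} R) : Set (PrimeSpectrum R) :=
  {p | ¬ Module.Free (Localization.AtPrime p.asIdeal) (LocalizedModule p.asIdeal.primeCompl M)}

/-- The infinite projective dimension locus of a module. -/
def IPD (M : ModuleCat.{u} R) : Set (PrimeSpectrum R) :=
  {p | localPdim R p M = (⊤ : WithBot ℕ∞)}

/-- The infinite projective dimension locus of a collection of modules. -/
def IPDcat (𝒳 : Set (ModuleCat.{u} R)) : Set (PrimeSpectrum R) :=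
  ⋃ M ∈ 𝒳, IPD R M

/-- The modules in `mod R` whose infinite projective dimension locus lies in `W`. -/
def IPDinv (W : Set (PrimeSpectrum R)) : Set (ModuleCat.{u} R) :=
  {M | Module.Finite R M ∧ IPD R M ⊆ W}

/-- A specialization closed subset of `Spec R`. -/
def SpecClosed (W : Set (PrimeSpectrum R)) : Prop :=
  ∀ p ∈ W, ∀ q : PrimeSpectrum R, p.asIdeal ≤ q.asIdeal → q ∈ W

/-- Membership in `add 𝒳_p`: direct summands of localizations of finite direct sums
of members of `𝒳`. -/
def memAddLocal (𝒳 : Set (ModuleCat.{u} R)) (p : PrimeSpectrum R)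
    (N : ModuleCat.{u} (Localization.AtPrime p.asIdeal)) : Prop :=
  ∃ (n : ℕ) (X : Fin n → ModuleCat.{u} R), (∀ i, X i ∈ 𝒳) ∧
    ∃ (N' : ModuleCat.{u} (Localization.AtPrime p.asIdeal)),
      Nonempty ((↥N × ↥N') ≃ₗ[Localization.AtPrime p.asIdeal]
        ((i : Fin n) → LocalizedModule p.asIdeal.primeCompl (X i)))

/-- `K` is an `n`-th syzygy of `M` computed from a minimal free resolution over the
local ring `S`. -/
def IsMinSyz (S : Type u) [CommRing S] [IsLocalRing S] :
    ℕ → ModuleCat.{u} S → ModuleCat.{u} S → Prop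
  | 0, M, K => Nonempty (K ≃ₗ[S] M)
  | n+1, M, K => ∃ (F : ModuleCat.{u} S) (g : F →ₗ[S] M) (K' : ModuleCat.{u} S)
      (i : K' →ₗ[S] F),
      Module.Finite S F ∧ Module.Free S F ∧ Function.Surjective g ∧
      (LinearMap.ker g ≤ (IsLocalRing.maximalIdeal S) • (⊤ : Submodule S F)) ∧
      Function.Injective i ∧ LinearMap.range i = LinearMap.ker g ∧
      IsMinSyz S n K' K

/-- `K` is an `n`-th syzygy of `M` in some projective resolution (over any ring). -/
def IsSyz : ℕ → ModuleCat.{u} R → ModuleCat.{u} R → Prop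
  | 0, M, K => Nonempty (K ≃ₗ[R] M)
  | n+1, M, K => ∃ (F : ModuleCat.{u} R) (g : F →ₗ[R] M) (K' : ModuleCat.{u} R)
      (i : K' →ₗ[R] F),
      Module.Finite R F ∧ Module.Projective R F ∧ Function.Surjective g ∧
      Function.Injective i ∧ LinearMap.range i = LinearMap.ker g ∧
      IsSyz n K' K

/-- `T` is (isomorphic to) the Auslander transpose of `M`, computed from a minimal
free presentation over the local ring `S`. -/
def IsTranspose (S : Type u) [CommRing S] [IsLocalRing S] (M T : ModuleCat.{u} S) : Prop :=
  ∃ (F1 F0 : ModuleCat.{u} S) (d : F1 →ₗ[S] F0) (e : F0 →ₗ[S] M),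
    Module.Finite S F0 ∧ Module.Free S F0 ∧ Module.Finite S F1 ∧ Module.Free S F1 ∧
    Function.Surjective e ∧ LinearMap.range d = LinearMap.ker e ∧
    LinearMap.ker e ≤ (IsLocalRing.maximalIdeal S) • (⊤ : Submodule S F0) ∧
    LinearMap.ker d ≤ (IsLocalRing.maximalIdeal S) • (⊤ : Submodule S F1) ∧
    Nonempty (T ≃ₗ[S] ((Module.Dual S F1) ⧸ LinearMap.range d.dualMap))

/-- `T` is (isomorphic to) `Tr Ω^n M` over the local ring `S`. -/
def IsTrOmega (S : Type u) [CommRing S] [IsLocalRing S] (n : ℕ) (M T : ModuleCat.{u} S) :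
    Prop :=
  ∃ K : ModuleCat.{u} S, IsMinSyz S n M K ∧ IsTranspose S K T

/-- Resolving subcategory `𝒳` is dominant on `W ⊆ Spec R`. -/
def DominantOn (𝒳 : Set (ModuleCat.{u} R)) (W : Set (PrimeSpectrum R)) : Prop :=
  ∀ p ∈ W, ∃ (n : ℕ) (K : ModuleCat.{u} (Localization.AtPrime p.asIdeal)),
    IsMinSyz (Localization.AtPrime p.asIdeal) n
      (ModuleCat.of (Localization.AtPrime p.asIdeal)
        (IsLocalRing.ResidueField (Localization.AtPrime p.asIdeal))) K ∧
    memAddLocal R 𝒳 p K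

/-- Dominant resolving subcategory. -/
def Dominant (𝒳 : Set (ModuleCat.{u} R)) : Prop := DominantOn R 𝒳 Set.univ

/-- A (noetherian) local ring is Cohen-Macaulay if its depth equals its Krull dimension. -/
def IsCMLocalRing (S : Type u) [CommRing S] [IsLocalRing S] : Prop :=
  IsNoetherianRing S ∧
    ((depthE S (IsLocalRing.maximalIdeal S) S : WithBot ℕ∞) = ringKrullDim S)

/-- A regular local ring: a noetherian local ring whose maximal ideal is generated by
`dim S` elements. -/
def IsRegLocalRing (S : Type u) [CommRing S] [IsLocalRing S] : Prop :=
  IsNoetherianRing S ∧ ∃ s : Finset S,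
    Ideal.span (s : Set S) = IsLocalRing.maximalIdeal S ∧
    ringKrullDim S = (s.card : WithBot ℕ∞)

/-- The singular locus of `R`. -/
def SingLocus : Set (PrimeSpectrum R) :=
  {p | ¬ IsRegLocalRing (Localization.AtPrime p.asIdeal)}

/-- A hypersurface local ring: the completion is a quotient of a regular local ring by
one element. -/
def IsHypersurfaceLocalRing (S : Type u) [CommRing S] [IsLocalRing S] : Prop :=
  ∃ (T : Type u) (_ : CommRing T) (_ : IsLocalRing T) (f : T),
    IsRegLocalRing T ∧
    Nonempty ((AdicCompletion (IsLocalRing.maximalIdeal S) S) ≃+* (T ⧸ Ideal.span {f}))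

/-- A complete intersection local ring: the completion is a quotient of a regular local
ring by a regular sequence. -/
def IsCompleteIntersectionLocalRing (S : Type u) [CommRing S] [IsLocalRing S] : Prop :=
  ∃ (T : Type u) (_ : CommRing T) (_ : IsLocalRing T) (rs : List T),
    IsRegLocalRing T ∧ RingTheory.Sequence.IsRegular T rs ∧
    Nonempty ((AdicCompletion (IsLocalRing.maximalIdeal S) S) ≃+*
      (T ⧸ Ideal.ofList rs))

/-- The subquotient `A / (A ⊓ B)` of two submodules, used for homology. -/
def subquot {S M : Type u} [CommRing S] [AddCommGroup M] [Module S M]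
    (A B : Submodule S M) : Type u :=
  A ⧸ (B.comap A.subtype)

noncomputable instance {S M : Type u} [CommRing S] [AddCommGroup M] [Module S M]
    (A B : Submodule S M) : AddCommGroup (subquot A B) :=
  inferInstanceAs (AddCommGroup (A ⧸ (B.comap A.subtype)))

noncomputable instance {S M : Type u} [CommRing S] [AddCommGroup M] [Module S M]
    (A B : Submodule S M) : Module S (subquot A B) :=
  inferInstanceAs (Module S (A ⧸ (B.comap A.subtype)))

/-- `E` is (isomorphic to) `Ext^{j+1}_S(M, S)`, computed from a finite free resolution. -/
def IsExtPos (S : Type u) [CommRing S] (j : ℕ) (M E : ModuleCat.{u} S) : Prop :=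
  ∃ (F : ℕ → ModuleCat.{u} S) (d : ∀ i : ℕ, (F (i+1) : Type u) →ₗ[S] F i)
    (e : (F 0 : Type u) →ₗ[S] M),
    (∀ i, Module.Finite S (F i)) ∧ (∀ i, Module.Free S (F i)) ∧
    Function.Surjective e ∧ LinearMap.range (d 0) = LinearMap.ker e ∧
    (∀ i, LinearMap.range (d (i+1)) = LinearMap.ker (d i)) ∧
    Nonempty (E ≃ₗ[S]
      subquot (LinearMap.ker ((d (j+1)).dualMap)) (LinearMap.range ((d j).dualMap)))

/-- `T` is (isomorphic to) `Tor_n^S(M, N)`, computed from a projective resolution of `M`. -/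
def IsTor (S : Type u) [CommRing S] (n : ℕ) (M N T : ModuleCat.{u} S) : Prop :=
  ∃ (F : ℕ → ModuleCat.{u} S) (d : ∀ i : ℕ, (F (i+1) : Type u) →ₗ[S] F i)
    (e : (F 0 : Type u) →ₗ[S] M),
    (∀ i, Module.Projective S (F i)) ∧
    Function.Surjective e ∧ LinearMap.range (d 0) = LinearMap.ker e ∧
    (∀ i, LinearMap.range (d (i+1)) = LinearMap.ker (d i)) ∧
    (match n with
      | 0 => Nonempty (T ≃ₗ[S] TensorProduct S M N)
      | (j+1) => Nonempty (T ≃ₗ[S]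
          subquot (LinearMap.ker (LinearMap.rTensor (↥N) (d j)))
            (LinearMap.range (LinearMap.rTensor (↥N) (d (j+1))))))

/-- `idLE n M` : the injective dimension of `M` is at most `n`. -/
def idLE (S : Type u) [CommRing S] : ℕ → ModuleCat.{u} S → Prop
  | 0, M => Module.Injective S M
  | n+1, M => ∃ (I C : ModuleCat.{u} S) (f : M →ₗ[S] I) (g : I →ₗ[S] C),
      IsSES f g ∧ Module.Injective S I ∧ idLE S n C

/-- `PD_0^n(R)` over a local ring: modules of projective dimension at most `n` that are
free on the punctured spectrum. -/
def PD0n [IsLocalRing R] (n : ℕ) : Set (ModuleCat.{u} R) :=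
  {M | Module.Finite R M ∧ pdLE R n M ∧
    ∀ p : PrimeSpectrum R, p.asIdeal ≠ IsLocalRing.maximalIdeal R →
      Module.Free (Localization.AtPrime p.asIdeal) (LocalizedModule p.asIdeal.primeCompl M)}

/-- `PD_0(R)` over a local ring: modules of finite projective dimension that are
free on the punctured spectrum. -/
def PD0 [IsLocalRing R] : Set (ModuleCat.{u} R) :=
  {M | Module.Finite R M ∧ (∃ n : ℕ, pdLE R n M) ∧
    ∀ p : PrimeSpectrum R, p.asIdeal ≠ IsLocalRing.maximalIdeal R →
      Module.Free (Localization.AtPrime p.asIdeal) (LocalizedModule p.asIdeal.primeCompl M)}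

/-- The residue field of a local ring, as a bundled module. -/
noncomputable abbrev residueMod (S : Type u) [CommRing S] [IsLocalRing S] : ModuleCat.{u} S :=
  ModuleCat.of S (IsLocalRing.ResidueField S)

end ResolvPaper

namespace ResolvPaper

section General

variable {R : Type u} [CommRing R]

/-- unbundled membership -/
def In (𝒳 : Set (ModuleCat.{u} R)) (A : Type u) [AddCommGroup A] [Module R A] : Prop :=
  ModuleCat.of R A ∈ 𝒳

section SES
variable {A B C D E : Type u} [AddCommGroup A] [Module R A] [AddCommGroup B] [Module R B]
  [AddCommGroup C] [Module R C] [AddCommGroup D] [Module R D] [AddCommGroup E] [Module R E]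

theorem IsSES.mk' {f : A →ₗ[R] B} {g : B →ₗ[R] C} (h1 : Function.Injective f)
    (h2 : Function.Surjective g) (h3 : ∀ b, g b = 0 ↔ ∃ a, f a = b) : IsSES f g :=
  ⟨h1, h2, by ext b; simp [h3]⟩

theorem IsSES.inj {f : A →ₗ[R] B} {g : B →ₗ[R] C} (h : IsSES f g) : Function.Injective f := h.1
theorem IsSES.surj {f : A →ₗ[R] B} {g : B →ₗ[R] C} (h : IsSES f g) : Function.Surjective g := h.2.1
theorem IsSES.iff {f : A →ₗ[R] B} {g : B →ₗ[R] C} (h : IsSES f g) (b : B) :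
    g b = 0 ↔ ∃ a, f a = b := by
  rw [← LinearMap.mem_ker, ← h.2.2, LinearMap.mem_range]
theorem IsSES.zero {f : A →ₗ[R] B} {g : B →ₗ[R] C} (h : IsSES f g) (a : A) : g (f a) = 0 :=
  (h.iff _).2 ⟨a, rfl⟩

theorem ker_ses (g : B →ₗ[R] C) (hg : Function.Surjective g) :
    IsSES (LinearMap.ker g).subtype g :=
  ⟨Submodule.injective_subtype _, hg, by simp⟩

/-- Build a map into the kernel term. -/
theorem IsSES.lift {f : A →ₗ[R] B} {g : B →ₗ[R] C} (h : IsSES f g) (u : D →ₗ[R] B)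
    (hu : ∀ d, g (u d) = 0) : ∃ v : D →ₗ[R] A, ∀ d, f (v d) = u d := by
  let e := LinearEquiv.ofInjective f h.inj
  refine ⟨e.symm.toLinearMap ∘ₗ u.codRestrict (LinearMap.range f) (fun d => ?_), fun d => ?_⟩
  · exact (h.iff _).1 (hu d)
  · exact congrArg Subtype.val (e.apply_symm_apply (u.codRestrict (LinearMap.range f)
      (fun d => (h.iff _).1 (hu d)) d))

/-- Build a map out of the cokernel term. -/
theorem IsSES.desc {f : A →ₗ[R] B} {g : B →ₗ[R] C} (h : IsSES f g) (u : B →ₗ[R] D)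
    (hu : ∀ a, u (f a) = 0) : ∃ v : C →ₗ[R] D, ∀ b, v (g b) = u b := by
  have hk : LinearMap.ker g ≤ LinearMap.ker u := by
    intro b hb
    obtain ⟨a, rfl⟩ := (h.iff _).1 hb
    exact hu a
  let e := g.quotKerEquivOfSurjective h.surj
  refine ⟨(LinearMap.ker g).liftQ u hk ∘ₗ e.symm.toLinearMap, fun b => ?_⟩
  have : e.symm (g b) = (LinearMap.ker g).mkQ b := by
    rw [LinearEquiv.symm_apply_eq]; rfl
  simp [this]

end SES

namespace IsResolving

variable {𝒳 : Set (ModuleCat.{u} R)}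
variable {A B C D E : Type u} [AddCommGroup A] [Module R A] [AddCommGroup B] [Module R B]
  [AddCommGroup C] [Module R C] [AddCommGroup D] [Module R D] [AddCommGroup E] [Module R E]

theorem fin (h : IsResolving R 𝒳) (hA : In 𝒳 A) : Module.Finite R A := h.fg _ hA
theorem iso (h : IsResolving R 𝒳) (e : A ≃ₗ[R] B) (hA : In 𝒳 A) : In 𝒳 B := h.iso_closed (.of R A) (.of R B) ⟨e⟩ hA
theorem proj (h : IsResolving R 𝒳) [Module.Finite R A] [Module.Projective R A] : In 𝒳 A :=
  h.proj_mem (.of R A) ‹_› ‹_›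
theorem ext (h : IsResolving R 𝒳) {f : A →ₗ[R] B} {g : B →ₗ[R] C} (s : IsSES f g) (hA : In 𝒳 A) (hC : In 𝒳 C) :
    In 𝒳 B := h.ext_closed (.of R A) (.of R B) (.of R C) f g s hA hC
theorem syz (h : IsResolving R 𝒳) [IsNoetherianRing R] [Module.Finite R B] [Module.Projective R B]
    {f : A →ₗ[R] B} {g : B →ₗ[R] C} (s : IsSES f g)
    (hC : In 𝒳 C) : In 𝒳 A :=
  h.syzygy_closed (.of R A) (.of R B) (.of R C) f g s
    (Module.Finite.of_injective f s.inj) ‹_› ‹_› hC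
theorem fst (h : IsResolving R 𝒳) (hA : In 𝒳 (A × B)) : In 𝒳 A := h.summand_closed (.of R A) (.of R B) hA
theorem prod (h : IsResolving R 𝒳) (hA : In 𝒳 A) (hB : In 𝒳 B) : In 𝒳 (A × B) :=
  h.ext (f := LinearMap.inl R A B) (g := LinearMap.snd R A B)
    (IsSES.mk' LinearMap.inl_injective LinearMap.snd_surjective
      (by rintro ⟨a, b⟩; simp [eq_comm])) hA hB

theorem retract (h : IsResolving R 𝒳) (i : A →ₗ[R] B) (ρ : B →ₗ[R] A) (hi : ∀ a, ρ (i a) = a) (hB : In 𝒳 B) :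
    In 𝒳 A := by
  have e : B ≃ₗ[R] A × LinearMap.ker ρ :=
    { toFun := fun b => (ρ b, ⟨b - i (ρ b), by simp [hi]⟩)
      map_add' := fun x y => by
        ext
        · simp
        · simp; abel
      map_smul' := fun r x => by
        ext
        · simp
        · simp [smul_sub]
      invFun := fun x => i x.1 + x.2.1
      left_inv := fun b => by simp
      right_inv := fun x => by
        have := x.2.2
        rw [LinearMap.mem_ker] at this
        ext
        · simp [hi]
        · simp [hi] }
  exact h.fst (h.iso e hB)

theorem of_split (h : IsResolving R 𝒳) [Module.Projective R C] {f : A →ₗ[R] B} {g : B →ₗ[R] C} (s : IsSES f g)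
    (hB : In 𝒳 B) : In 𝒳 A := by
  obtain ⟨t, ht⟩ := Module.projective_lifting_property g LinearMap.id s.surj
  have ht' : ∀ c, g (t c) = c := fun c => LinearMap.congr_fun ht c
  obtain ⟨ρ, hρ⟩ := s.lift (LinearMap.id - t ∘ₗ g) (by intro b; simp [ht'])
  refine h.retract f ρ (fun a => s.inj ?_) hB
  rw [hρ]; simp [s.zero]

end IsResolving

/-- modules whose first syzygy lies in `𝒳` -/
def Tc (𝒳 : Set (ModuleCat.{u} R)) : Set (ModuleCat.{u} R) :=
  {C | Module.Finite R C ∧ ∃ (K P : ModuleCat.{u} R) (f : K →ₗ[R] P) (g : P →ₗ[R] C),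
    Module.Finite R P ∧ Module.Projective R P ∧ IsSES f g ∧ K ∈ 𝒳}

section
variable {A B C D E : Type u} [AddCommGroup A] [Module R A] [AddCommGroup B] [Module R B]
  [AddCommGroup C] [Module R C] [AddCommGroup D] [Module R D] [AddCommGroup E] [Module R E]
variable {𝒳 : Set (ModuleCat.{u} R)}

theorem Tc.mk [Module.Finite R B] [Module.Projective R B]
    {f : A →ₗ[R] B} {g : B →ₗ[R] C} (s : IsSES f g)
    (hA : In 𝒳 A) : In (Tc 𝒳) C :=
  ⟨Module.Finite.of_surjective g s.surj, .of R A, .of R B, f, g, ‹_›, ‹_›, s, hA⟩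

theorem Tc.elim (hC : In (Tc 𝒳) C) : ∃ (K P : Type u) (_ : AddCommGroup K) (_ : AddCommGroup P)
    (_ : Module R K) (_ : Module R P)
    (f : K →ₗ[R] P) (g : P →ₗ[R] C), Module.Finite R P ∧ Module.Projective R P ∧
    IsSES f g ∧ In 𝒳 K := by
  obtain ⟨_, K, P, f, g, h1, h2, h3, h4⟩ := hC
  exact ⟨K, P, _, _, _, _, f, g, h1, h2, h3, h4⟩

theorem exists_cover (C : Type u) [AddCommGroup C] [Module R C] [Module.Finite R C] :
    ∃ (n : ℕ) (g : (Fin n → R) →ₗ[R] C), Function.Surjective g := by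
  exact Module.Finite.exists_fin' R C

/-- the pullback -/
abbrev pull (g : B →ₗ[R] C) (g' : D →ₗ[R] C) : Submodule R (B × D) :=
  LinearMap.ker (g ∘ₗ LinearMap.fst R B D - g' ∘ₗ LinearMap.snd R B D)

theorem mem_pull (g : B →ₗ[R] C) (g' : D →ₗ[R] C) (x : B × D) :
    x ∈ pull g g' ↔ g x.1 = g' x.2 := by
  simp [sub_eq_zero]

theorem pull_ses {f : A →ₗ[R] B} {g : B →ₗ[R] C} (s : IsSES f g) (g' : D →ₗ[R] C) :
    IsSES ((LinearMap.inl R B D ∘ₗ f).codRestrict (pull g g')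
      (fun a => by simp [s.zero]))
      (LinearMap.snd R B D ∘ₗ (pull g g').subtype) := by
  refine IsSES.mk' ?_ ?_ ?_
  · intro a a' haa
    have := congrArg (fun x => x.1.1) haa
    exact s.inj this
  · intro d
    obtain ⟨b, hb⟩ := s.surj (g' d)
    exact ⟨⟨(b, d), by rw [mem_pull]; exact hb⟩, rfl⟩
  · rintro ⟨⟨b, d⟩, hx⟩
    rw [mem_pull] at hx
    constructor
    · intro h0
      have h0 : d = 0 := h0
      subst h0
      obtain ⟨a, rfl⟩ := (s.iff b).1 (by simpa using hx)
      exact ⟨a, rfl⟩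
    · rintro ⟨a, ha⟩
      exact (congrArg (fun x => x.1.2) ha).symm

theorem pull_ses' {f : A →ₗ[R] D} {g' : D →ₗ[R] C} (s : IsSES f g') (g : B →ₗ[R] C) :
    IsSES ((LinearMap.inr R B D ∘ₗ f).codRestrict (pull g g')
      (fun a => by simp [s.zero]))
      (LinearMap.fst R B D ∘ₗ (pull g g').subtype) := by
  refine IsSES.mk' ?_ ?_ ?_
  · intro a a' haa
    have := congrArg (fun x => x.1.2) haa
    exact s.inj this
  · intro d
    obtain ⟨b, hb⟩ := s.surj (g d)
    exact ⟨⟨(d, b), by rw [mem_pull]; exact hb.symm⟩, rfl⟩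
  · rintro ⟨⟨d, b⟩, hx⟩
    rw [mem_pull] at hx
    constructor
    · intro h0
      have h0 : d = 0 := h0
      subst h0
      obtain ⟨a, rfl⟩ := (s.iff b).1 (by simpa using hx.symm)
      exact ⟨a, rfl⟩
    · rintro ⟨a, ha⟩
      exact (congrArg (fun x => x.1.1) ha).symm

/-- Generalized Schanuel. -/
theorem IsResolving.left (h : IsResolving R 𝒳) {f : A →ₗ[R] B} {g : B →ₗ[R] C} (s : IsSES f g)
    (hB : In 𝒳 B) (hC : In (Tc 𝒳) C) : In 𝒳 A := by
  obtain ⟨K, P, _, _, _, _, f', g', _, _, s', hK⟩ := Tc.elim hC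
  have hE : In 𝒳 (pull g' g) := h.ext (pull_ses s' g) hK hB
  exact h.of_split (pull_ses' s g') hE

theorem IsResolving.schanuel (h : IsResolving R 𝒳) [Module.Finite R B] [Module.Projective R B]
    {f : A →ₗ[R] B} {g : B →ₗ[R] C} (s : IsSES f g) (hC : In (Tc 𝒳) C) : In 𝒳 A :=
  h.left s h.proj hC

theorem IsResolving.sub_Tc [IsNoetherianRing R] (h : IsResolving R 𝒳) (hC : In 𝒳 C) :
    In (Tc 𝒳) C := by
  have := h.fin hC
  obtain ⟨n, g, hg⟩ := exists_cover (R := R) C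
  exact Tc.mk (ker_ses g hg) (h.syz (ker_ses g hg) hC)

theorem IsSES.prod {A' B' C' : Type u} [AddCommGroup A'] [Module R A'] [AddCommGroup B']
    [Module R B'] [AddCommGroup C'] [Module R C']
    {f : A →ₗ[R] B} {g : B →ₗ[R] C} (s : IsSES f g)
    {f' : A' →ₗ[R] B'} {g' : B' →ₗ[R] C'} (s' : IsSES f' g') :
    IsSES (f.prodMap f') (g.prodMap g') := by
  refine IsSES.mk' ?_ ?_ ?_
  · rw [LinearMap.coe_prodMap]; exact s.inj.prodMap s'.inj
  · rw [LinearMap.coe_prodMap]; exact s.surj.prodMap s'.surj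
  · rintro ⟨b, b'⟩
    simp only [LinearMap.prodMap_apply, Prod.mk_eq_zero, s.iff, s'.iff, Prod.exists, Prod.mk.injEq]
    exact ⟨fun ⟨⟨a, ha⟩, a', ha'⟩ => ⟨a, a', ha, ha'⟩, fun ⟨a, a', ha, ha'⟩ => ⟨⟨a, ha⟩, a', ha'⟩⟩

end
end General
end ResolvPaper

namespace ResolvPaper

section General2

variable {R : Type u} [CommRing R]

theorem IsResolving.mk_of {𝒳 : Set (ModuleCat.{u} R)}
    (fin : ∀ (A : Type u) [AddCommGroup A] [Module R A], In 𝒳 A → Module.Finite R A)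
    (ret : ∀ (A B : Type u) [AddCommGroup A] [Module R A] [AddCommGroup B] [Module R B]
      (i : A →ₗ[R] B) (ρ : B →ₗ[R] A), (∀ a, ρ (i a) = a) → In 𝒳 B → In 𝒳 A)
    (proj : ∀ (A : Type u) [AddCommGroup A] [Module R A] [Module.Finite R A]
      [Module.Projective R A], In 𝒳 A)
    (ext : ∀ (A B C : Type u) [AddCommGroup A] [Module R A] [AddCommGroup B] [Module R B]
      [AddCommGroup C] [Module R C] (f : A →ₗ[R] B) (g : B →ₗ[R] C), IsSES f g →
      In 𝒳 A → In 𝒳 C → In 𝒳 B)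
    (syz : ∀ (A B C : Type u) [AddCommGroup A] [Module R A] [AddCommGroup B] [Module R B]
      [AddCommGroup C] [Module R C] [Module.Finite R A] [Module.Finite R B]
      [Module.Projective R B] (f : A →ₗ[R] B) (g : B →ₗ[R] C), IsSES f g →
      In 𝒳 C → In 𝒳 A) : IsResolving R 𝒳 where
  fg M hM := fin M hM
  iso_closed M N e hM := by
    obtain ⟨e⟩ := e
    exact ret N M e.symm.toLinearMap e.toLinearMap (by simp) hM
  proj_mem M _ _ := proj M
  summand_closed M N h := ret M (M × N) (LinearMap.inl R M N) (LinearMap.fst R M N) (by simp) h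
  ext_closed A B C f g s hA hC := ext A B C f g s hA hC
  syzygy_closed A B C f g s _ _ _ hC := syz A B C f g s hC

theorem finite_of_ses {A B C : Type u} [AddCommGroup A] [Module R A] [AddCommGroup B] [Module R B]
    [AddCommGroup C] [Module R C] {f : A →ₗ[R] B} {g : B →ₗ[R] C} (s : IsSES f g)
    (hA : Module.Finite R A) (hC : Module.Finite R C) : Module.Finite R B := by
  have hK : (LinearMap.ker g).FG := by
    rw [← s.2.2, LinearMap.range_eq_map]
    exact hA.fg_top.map f
  refine ⟨Submodule.fg_of_fg_map_of_fg_inf_ker g ?_ (by simpa using hK)⟩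
  rw [← LinearMap.range_eq_map, LinearMap.range_eq_top.2 s.surj]
  exact hC.fg_top

theorem Tc.fin {𝒳 : Set (ModuleCat.{u} R)} {C : Type u} [AddCommGroup C] [Module R C]
    (h : In (Tc 𝒳) C) : Module.Finite R C := h.1

/-- `P → B → C` composite: the kernel sequence. -/
theorem ses_comp {P B C A : Type u} [AddCommGroup A] [Module R A] [AddCommGroup B] [Module R B]
    [AddCommGroup C] [Module R C] [AddCommGroup P] [Module R P] (p : P →ₗ[R] B)
    (hp : Function.Surjective p) {f : A →ₗ[R] B} {g : B →ₗ[R] C} (s : IsSES f g) :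
    ∃ (u : LinearMap.ker p →ₗ[R] LinearMap.ker (g ∘ₗ p)) (v : LinearMap.ker (g ∘ₗ p) →ₗ[R] A),
      IsSES u v := by
  obtain ⟨v, hv⟩ := s.lift (p ∘ₗ (LinearMap.ker (g ∘ₗ p)).subtype) (fun d => d.2)
  have hv' : ∀ d : LinearMap.ker (g ∘ₗ p), f (v d) = p d.1 := hv
  refine ⟨Submodule.inclusion (fun x hx => by
    rw [LinearMap.mem_ker] at hx; simp [hx]), v, IsSES.mk' ?_ ?_ ?_⟩
  · exact Submodule.inclusion_injective _
  · intro a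
    obtain ⟨x, hx⟩ := hp (f a)
    refine ⟨⟨x, by simp [hx, s.zero]⟩, s.inj ?_⟩
    rw [hv']; exact hx
  · rintro b
    constructor
    · intro h0
      refine ⟨⟨b.1, ?_⟩, rfl⟩
      rw [LinearMap.mem_ker, ← hv', h0, map_zero]
    · rintro ⟨a, rfl⟩
      apply s.inj
      exact (hv' _).trans (a.2.trans (map_zero f).symm)

theorem Tc.resolving [IsNoetherianRing R] {𝒳 : Set (ModuleCat.{u} R)} (h : IsResolving R 𝒳) :
    IsResolving R (Tc 𝒳) := by
  refine IsResolving.mk_of (fun A _ _ hA => hA.1) ?_ ?_ ?_ ?_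
  · intro A B _ _ _ _ i ρ hi hB
    have := hB.1
    have : Module.Finite R A := Module.Finite.of_surjective ρ (fun a => ⟨_, hi a⟩)
    have : Module.Finite R (LinearMap.ker ρ) := inferInstance
    obtain ⟨n, g, hg⟩ := exists_cover (R := R) A
    obtain ⟨n', g', hg'⟩ := exists_cover (R := R) (LinearMap.ker ρ)
    have s := (ker_ses g hg).prod (ker_ses g' hg')
    let e : B ≃ₗ[R] A × LinearMap.ker ρ :=
    { toFun := fun b => (ρ b, ⟨b - i (ρ b), by simp [hi]⟩)
      map_add' := fun x y => by
        ext
        · simp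
        · simp; abel
      map_smul' := fun r x => by
        ext
        · simp
        · simp [smul_sub]
      invFun := fun x => i x.1 + x.2.1
      left_inv := fun b => by simp
      right_inv := fun x => by
        have := x.2.2
        rw [LinearMap.mem_ker] at this
        ext
        · simp [hi]
        · simp [hi] }
    have s' : IsSES ((LinearMap.ker g).subtype.prodMap (LinearMap.ker g').subtype)
        (e.symm.toLinearMap ∘ₗ (g.prodMap g')) := by
      refine IsSES.mk' s.inj (e.symm.surjective.comp s.surj) ?_
      intro b
      rw [← s.iff]; simp
    exact Tc.mk (ker_ses g hg) (h.fst (h.schanuel s' hB))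
  · intro A _ _ _ _
    refine Tc.mk (A := PUnit) (B := A) (f := 0) (g := LinearMap.id)
      (IsSES.mk' (fun a b _ => rfl) (fun a => ⟨a, rfl⟩) (by simp [eq_comm])) h.proj
  · intro A B C _ _ _ _ _ _ f g s hA hC
    have := finite_of_ses s hA.1 hC.1
    obtain ⟨n, p, hp⟩ := exists_cover (R := R) B
    obtain ⟨u, v, s'⟩ := ses_comp p hp s
    have : In 𝒳 (LinearMap.ker (g ∘ₗ p)) :=
      h.schanuel (ker_ses (g ∘ₗ p) (s.surj.comp hp)) hC
    exact Tc.mk (ker_ses p hp) (h.left s' this hA)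
  · intro A B C _ _ _ _ _ _ _ _ _ f g s hC
    exact h.sub_Tc (h.schanuel s hC)

/-- iterated version -/
def TT (𝒳 : Set (ModuleCat.{u} R)) : ℕ → Set (ModuleCat.{u} R)
  | 0 => 𝒳
  | n+1 => Tc (TT 𝒳 n)

theorem TT.resolving [IsNoetherianRing R] {𝒳 : Set (ModuleCat.{u} R)} (h : IsResolving R 𝒳) (n : ℕ) :
    IsResolving R (TT 𝒳 n) := by
  induction n with
  | zero => exact h
  | succ n ih => exact Tc.resolving ih

theorem TT.mono [IsNoetherianRing R] {𝒳 : Set (ModuleCat.{u} R)} (h : IsResolving R 𝒳) {m n : ℕ}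
    (hmn : m ≤ n) {A : Type u} [AddCommGroup A] [Module R A] (hA : In (TT 𝒳 m) A) :
    In (TT 𝒳 n) A := by
  induction n, hmn using Nat.le_induction with
  | base => exact hA
  | succ n _ ih => exact (TT.resolving h n).sub_Tc ih

/-- finitely generated projective modules -/
def projC (R : Type u) [CommRing R] : Set (ModuleCat.{u} R) :=
  {M | Module.Finite R M ∧ Module.Projective R M}

theorem projC.resolving : IsResolving R (projC R) := by
  refine IsResolving.mk_of (fun A _ _ hA => hA.1) ?_ ?_ ?_ ?_
  · intro A B _ _ _ _ i ρ hi hB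
    have : Module.Finite R B := hB.1
    have : Module.Projective R B := hB.2
    exact ⟨Module.Finite.of_surjective ρ (fun a => ⟨_, hi a⟩),
      Module.Projective.of_split i ρ (LinearMap.ext hi)⟩
  · intro A _ _ _ _
    exact ⟨‹_›, ‹_›⟩
  · intro A B C _ _ _ _ _ _ f g s hA hC
    refine ⟨finite_of_ses s hA.1 hC.1, ?_⟩
    have : Module.Projective R A := hA.2
    have : Module.Projective R C := hC.2
    obtain ⟨t, ht⟩ := Module.projective_lifting_property g LinearMap.id s.surj
    have ht' : ∀ c, g (t c) = c := fun c => LinearMap.congr_fun ht c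
    obtain ⟨ρ, hρ⟩ := s.lift (LinearMap.id - t ∘ₗ g) (by intro b; simp [ht'])
    refine Module.Projective.of_split (P := B) (M := A × C) (ρ.prod g) (f.coprod t) ?_
    ext b
    simp [hρ]
  · intro A B C _ _ _ _ _ _ _ _ _ f g s hC
    have : Module.Projective R C := hC.2
    refine ⟨‹_›, ?_⟩
    obtain ⟨t, ht⟩ := Module.projective_lifting_property g LinearMap.id s.surj
    have ht' : ∀ c, g (t c) = c := fun c => LinearMap.congr_fun ht c
    obtain ⟨ρ, hρ⟩ := s.lift (LinearMap.id - t ∘ₗ g) (by intro b; simp [ht'])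
    refine Module.Projective.of_split f ρ ?_
    ext a
    apply s.inj
    simp [hρ, s.zero]

theorem iInter_resolving {ι : Sort*} {𝒳 : ι → Set (ModuleCat.{u} R)} (i0 : ι)
    (h : ∀ i, IsResolving R (𝒳 i)) :
    IsResolving R (⋂ i, 𝒳 i) := by
  have key : ∀ (A : Type u) [AddCommGroup A] [Module R A], In (⋂ i, 𝒳 i) A ↔ ∀ i, In (𝒳 i) A :=
    fun A _ _ => by simp [In]
  refine IsResolving.mk_of ?_ ?_ ?_ ?_ ?_
  · intro A _ _ hA
    exact (h i0).fin ((key A).1 hA i0)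
  · intro A B _ _ _ _ i ρ hi hB
    rw [key] at *
    exact fun j => (h j).retract i ρ hi (hB j)
  · intro A _ _ _ _
    rw [key]; exact fun j => (h j).proj
  · intro A B C _ _ _ _ _ _ f g s hA hC
    rw [key] at *
    exact fun j => (h j).ext s (hA j) (hC j)
  · intro A B C _ _ _ _ _ _ _ _ _ f g s hC
    rw [key] at *
    exact fun j => (h j).syzygy_closed (.of R A) (.of R B) (.of R C) f g s ‹_› ‹_› ‹_› (hC j)

/-- multiplication by `r` on `M` factors through a member of `𝒳`. -/
def Fac (𝒳 : Set (ModuleCat.{u} R)) (r : R) (M : Type u) [AddCommGroup M] [Module R M] : Prop :=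
  ∃ (X : ModuleCat.{u} R) (i : M →ₗ[R] X) (j : X →ₗ[R] M), X ∈ 𝒳 ∧ ∀ m, j (i m) = r • m

theorem Fac.mk {𝒳 : Set (ModuleCat.{u} R)} {r : R} {M X : Type u} [AddCommGroup M] [Module R M]
    [AddCommGroup X] [Module R X] (hX : In 𝒳 X) (i : M →ₗ[R] X) (j : X →ₗ[R] M)
    (h : ∀ m, j (i m) = r • m) : Fac 𝒳 r M := ⟨.of R X, i, j, hX, h⟩

theorem Fac.elim {𝒳 : Set (ModuleCat.{u} R)} {r : R} {M : Type u} [AddCommGroup M] [Module R M]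
    (h : Fac 𝒳 r M) : ∃ (X : Type u) (_ : AddCommGroup X) (_ : Module R X) (i : M →ₗ[R] X)
    (j : X →ₗ[R] M), In 𝒳 X ∧ ∀ m, j (i m) = r • m := by
  obtain ⟨X, i, j, hX, h⟩ := h
  exact ⟨X, _, _, i, j, hX, h⟩

theorem Fac.mul {𝒳 : Set (ModuleCat.{u} R)} {r : R} {M : Type u} [AddCommGroup M] [Module R M]
    (h : Fac 𝒳 r M) (c : R) : Fac 𝒳 (c * r) M := by
  obtain ⟨X, _, _, i, j, hX, h⟩ := h.elim
  exact Fac.mk hX i (c • j) (by intro m; simp [h, mul_smul])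

theorem Fac.add {𝒳 : Set (ModuleCat.{u} R)} (h𝒳 : IsResolving R 𝒳)
    {r r' : R} {M : Type u} [AddCommGroup M] [Module R M]
    (h : Fac 𝒳 r M) (h' : Fac 𝒳 r' M) : Fac 𝒳 (r + r') M := by
  obtain ⟨X, _, _, i, j, hX, h⟩ := h.elim
  obtain ⟨X', _, _, i', j', hX', h'⟩ := h'.elim
  exact Fac.mk (h𝒳.prod hX hX') (i.prod i') (j.coprod j') (by intro m; simp [h, h', add_smul])

theorem Fac.ext {𝒳 : Set (ModuleCat.{u} R)} (h𝒳 : IsResolving R 𝒳)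
    {r r' : R} {A B C : Type u} [AddCommGroup A] [Module R A] [AddCommGroup B] [Module R B]
    [AddCommGroup C] [Module R C] {f : A →ₗ[R] B} {g : B →ₗ[R] C} (s : IsSES f g)
    (hA : Fac 𝒳 r A) (hC : Fac 𝒳 r' C) : Fac 𝒳 (r * r') B := by
  obtain ⟨X, _, _, i, j, hX, h⟩ := hA.elim
  obtain ⟨Z, _, _, i', j', hZ, h'⟩ := hC.elim
  let N : Submodule R (B × X) := LinearMap.range (f.prod (-i))
  let g1 : ((B × X) ⧸ N) →ₗ[R] C := N.liftQ (g ∘ₗ LinearMap.fst R B X) (by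
    rintro _ ⟨a, rfl⟩
    simp [s.zero])
  have hg1 : ∀ x, g1 (N.mkQ x) = g x.1 := fun x => rfl
  let f1 : X →ₗ[R] ((B × X) ⧸ N) := N.mkQ ∘ₗ LinearMap.inr R B X
  have s1 : IsSES f1 g1 := by
    refine IsSES.mk' ?_ ?_ ?_
    · rw [← LinearMap.ker_eq_bot, LinearMap.ker_eq_bot']
      intro x hx
      have hx : N.mkQ (0, x) = 0 := hx
      rw [Submodule.mkQ_apply, Submodule.Quotient.mk_eq_zero] at hx
      obtain ⟨a, ha⟩ := hx
      have h1 : f a = 0 := congrArg Prod.fst ha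
      have h2 : -i a = x := congrArg Prod.snd ha
      have h3 : a = 0 := s.inj (by rw [h1, map_zero])
      rw [← h2, h3]; simp
    · intro c
      obtain ⟨b, rfl⟩ := s.surj c
      exact ⟨N.mkQ (b, 0), rfl⟩
    · intro b
      obtain ⟨⟨b, x⟩, rfl⟩ := N.mkQ_surjective b
      rw [hg1]
      constructor
      · intro h0
        obtain ⟨a, rfl⟩ := (s.iff b).1 h0
        refine ⟨x + i a, ?_⟩
        change N.mkQ (0, x + i a) = _
        rw [Submodule.mkQ_apply, Submodule.mkQ_apply, Submodule.Quotient.eq]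
        exact ⟨-a, by simp⟩
      · rintro ⟨y, hy⟩
        rw [← hg1, ← hy]
        change g 0 = 0
        simp
  let back : ((B × X) ⧸ N) →ₗ[R] B := N.liftQ ((r • LinearMap.id).coprod (f ∘ₗ j)) (by
    rintro _ ⟨a, rfl⟩
    simp [h])
  have s2 := pull_ses s1 j'
  have hin : In 𝒳 (pull g1 j') := h𝒳.ext s2 hX hZ
  let fwd : B →ₗ[R] pull g1 j' := LinearMap.codRestrict _
    ((r' • (N.mkQ ∘ₗ LinearMap.inl R B X)).prod (i' ∘ₗ g)) (by
      intro b
      rw [mem_pull]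
      change g1 (r' • N.mkQ (b, 0)) = j' (i' (g b))
      rw [map_smul, hg1, h'])
  refine Fac.mk hin fwd (back ∘ₗ LinearMap.fst R _ _ ∘ₗ Submodule.subtype _) ?_
  intro b
  change back (r' • N.mkQ (b, 0)) = _
  rw [map_smul]
  change r' • (r • b + f (j 0)) = _
  simp [smul_smul, mul_comm]

theorem Fac.syz [IsNoetherianRing R] {𝒳 : Set (ModuleCat.{u} R)} (h𝒳 : IsResolving R 𝒳)
    {r : R} {A B C : Type u} [AddCommGroup A] [Module R A] [AddCommGroup B] [Module R B]
    [Module.Finite R B] [Module.Projective R B]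
    [AddCommGroup C] [Module R C] {f : A →ₗ[R] B} {g : B →ₗ[R] C} (s : IsSES f g)
    (hC : Fac 𝒳 r C) : Fac 𝒳 r A := by
  obtain ⟨X, _, _, i, j, hX, h⟩ := hC.elim
  have := h𝒳.fin hX
  obtain ⟨n, p, hp⟩ := exists_cover (R := R) X
  have s' := ker_ses p hp
  have hK := h𝒳.syz s' hX
  obtain ⟨a, ha⟩ := Module.projective_lifting_property p (i ∘ₗ g) hp
  obtain ⟨b, hb⟩ := Module.projective_lifting_property g (j ∘ₗ p) s.surj
  have ha' : ∀ x, p (a x) = i (g x) := fun x => LinearMap.congr_fun ha x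
  have hb' : ∀ x, g (b x) = j (p x) := fun x => LinearMap.congr_fun hb x
  obtain ⟨u, hu⟩ := s'.lift (a ∘ₗ f) (by intro x; simp [ha', s.zero])
  obtain ⟨v, hv⟩ := s.lift (b ∘ₗ (LinearMap.ker p).subtype) (by intro x; simp [hb'])
  obtain ⟨w, hw⟩ := s.lift (r • LinearMap.id - b ∘ₗ a) (by intro x; simp [hb', ha', h])
  refine Fac.mk (h𝒳.prod hK (h𝒳.proj (A := B))) (u.prod f) (v.coprod w) ?_
  intro m
  apply s.inj
  have hu' : (u m).1 = a (f m) := hu m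
  simp [hv, hw, hu']

theorem Fac.retract {𝒳 : Set (ModuleCat.{u} R)} {r : R} {A B : Type u} [AddCommGroup A]
    [Module R A] [AddCommGroup B] [Module R B] (i : A →ₗ[R] B) (ρ : B →ₗ[R] A)
    (hi : ∀ a, ρ (i a) = a) (h : Fac 𝒳 r B) : Fac 𝒳 r A := by
  obtain ⟨X, _, _, i', j', hX, h⟩ := h.elim
  exact Fac.mk hX (i' ∘ₗ i) (ρ ∘ₗ j') (by intro m; simp [h, hi])

theorem Fac.one {𝒳 : Set (ModuleCat.{u} R)} {A : Type u} [AddCommGroup A]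
    [Module R A] (h : In 𝒳 A) : Fac 𝒳 1 A := Fac.mk h LinearMap.id LinearMap.id (by simp)

/-- modules `M` such that some element of `W` factors through `𝒳` -/
def locW (𝒳 : Set (ModuleCat.{u} R)) (W : Submonoid R) : Set (ModuleCat.{u} R) :=
  {M | Module.Finite R M ∧ ∃ r ∈ W, Fac 𝒳 r M}

theorem locW.resolving [IsNoetherianRing R] {𝒳 : Set (ModuleCat.{u} R)} (h : IsResolving R 𝒳)
    (W : Submonoid R) : IsResolving R (locW 𝒳 W) := by
  refine IsResolving.mk_of (fun A _ _ hA => hA.1) ?_ ?_ ?_ ?_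
  · rintro A B _ _ _ _ i ρ hi ⟨hB, r, hr, hf⟩
    have : Module.Finite R B := hB
    exact ⟨Module.Finite.of_surjective ρ (fun a => ⟨_, hi a⟩), r, hr, Fac.retract i ρ hi hf⟩
  · intro A _ _ _ _
    exact ⟨‹_›, 1, W.one_mem, Fac.one h.proj⟩
  · rintro A B C _ _ _ _ _ _ f g s ⟨hA, r, hr, hf⟩ ⟨hC, r', hr', hf'⟩
    exact ⟨finite_of_ses s hA hC, r * r', W.mul_mem hr hr', Fac.ext h s hf hf'⟩
  · rintro A B C _ _ _ _ _ _ _ _ _ f g s ⟨hC, r, hr, hf⟩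
    exact ⟨‹_›, r, hr, Fac.syz h s hf⟩

theorem sub_locW {𝒳 : Set (ModuleCat.{u} R)} (h : IsResolving R 𝒳)
    (W : Submonoid R) {A : Type u} [AddCommGroup A] [Module R A] (hA : In 𝒳 A) :
    In (locW 𝒳 W) A := ⟨h.fin hA, 1, W.one_mem, Fac.one hA⟩

end General2
end ResolvPaper

namespace ResolvPaper

section Pb
open scoped Pointwise

variable {R : Type u} [CommRing R]

/-- ideal of elements factoring through a projective -/
def sAnn (R : Type u) [CommRing R] (M : Type u) [AddCommGroup M] [Module R M] : Ideal R where
  carrier := {r | Fac (projC R) r M}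
  zero_mem' := Fac.mk (X := PUnit) (projC.resolving.proj) 0 0 (by simp)
  add_mem' := fun h h' => Fac.add projC.resolving h h'
  smul_mem' := fun c _ h => Fac.mul h c

theorem mem_sAnn {M : Type u} [AddCommGroup M] [Module R M] {r : R} :
    r ∈ sAnn R M ↔ Fac (projC R) r M := Iff.rfl

variable {A B C D E F K P : Type u} [AddCommGroup A] [Module R A] [AddCommGroup B] [Module R B]
  [AddCommGroup C] [Module R C] [AddCommGroup D] [Module R D] [AddCommGroup E] [Module R E]
  [AddCommGroup F] [Module R F] [AddCommGroup K] [Module R K] [AddCommGroup P] [Module R P]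
variable {𝒳 : Set (ModuleCat.{u} R)}

/-- pullback of a cover along multiplication by `r` -/
abbrev pb (π : F →ₗ[R] C) (r : R) : Submodule R (F × C) := pull π (r • LinearMap.id)

theorem mem_pb (π : F →ₗ[R] C) (r : R) (x : F × C) : x ∈ pb π r ↔ π x.1 = r • x.2 := by
  rw [mem_pull]; rfl

theorem pb_ses {f : K →ₗ[R] F} {π : F →ₗ[R] C} (s : IsSES f π) (r : R) :
    IsSES ((LinearMap.inl R F C ∘ₗ f).codRestrict (pb π r)
      (fun a => by simp [s.zero]))
      (LinearMap.snd R F C ∘ₗ (pb π r).subtype) := pull_ses s _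

theorem pb_fac (π : F →ₗ[R] C) (r : R) [Module.Finite R F] [Module.Projective R F] :
    Fac (projC R) r (pb π r) := by
  refine Fac.mk (X := F) projC.resolving.proj (LinearMap.fst R F C ∘ₗ (pb π r).subtype)
    (((r • LinearMap.id).prod π).codRestrict (pb π r) (fun a => by rw [mem_pb]; simp)) ?_
  rintro ⟨⟨a, c⟩, h⟩
  rw [mem_pb] at h
  ext
  · rfl
  · exact h

theorem IsResolving.of_pb (h𝒳 : IsResolving R 𝒳) {π : F →ₗ[R] C} (hπ : Function.Surjective π)
    {r : R} (hf : Fac 𝒳 r C) (h : In 𝒳 (pb π r)) : In 𝒳 C := by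
  obtain ⟨X, _, _, i, j, hX, hij⟩ := hf.elim
  let N : Submodule R (F × (X × C)) := LinearMap.ker (π.coprod (j.coprod (-(r • LinearMap.id))))
  have hN : ∀ x, x ∈ N ↔ π x.1 + j x.2.1 = r • x.2.2 := by
    intro x
    simp only [N, LinearMap.mem_ker, LinearMap.coprod_apply, LinearMap.neg_apply,
      LinearMap.smul_apply, LinearMap.id_apply]
    rw [← add_assoc, ← sub_eq_add_neg, sub_eq_zero]
  let a : pb π r →ₗ[R] N := LinearMap.codRestrict N
    ((LinearMap.fst R F C).prod ((0 : F × C →ₗ[R] X).prod (LinearMap.snd R F C)) ∘ₗ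
      (pb π r).subtype) (by
      rintro ⟨⟨x, c⟩, hx⟩
      rw [mem_pb] at hx
      rw [hN]; simpa using hx)
  let b : N →ₗ[R] X := LinearMap.fst R X C ∘ₗ LinearMap.snd R F (X × C) ∘ₗ N.subtype
  have s : IsSES a b := by
    refine IsSES.mk' ?_ ?_ ?_
    · rintro ⟨⟨x, c⟩, hx⟩ ⟨⟨x', c'⟩, hx'⟩ hxx
      have h1 : x = x' := congrArg (fun z => z.1.1) hxx
      have h2 : c = c' := congrArg (fun z => z.1.2.2) hxx
      subst h1 h2; rfl
    · intro x
      obtain ⟨y, hy⟩ := hπ (-j x)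
      exact ⟨⟨(y, x, 0), by rw [hN]; simp [hy]⟩, rfl⟩
    · rintro ⟨⟨y, x, c⟩, hx⟩
      constructor
      · intro h0
        have h0 : x = 0 := h0
        subst h0
        rw [hN] at hx
        exact ⟨⟨(y, c), by rw [mem_pb]; simpa using hx⟩, rfl⟩
      · rintro ⟨z, hz⟩
        exact (congrArg (fun z => z.1.2.1) hz).symm
  have hin : In 𝒳 N := h𝒳.ext s h hX
  refine h𝒳.retract (LinearMap.codRestrict N ((0 : C →ₗ[R] F).prod (i.prod LinearMap.id))
    (fun c => by rw [hN]; simp [hij])) (LinearMap.snd R X C ∘ₗ LinearMap.snd R F (X × C) ∘ₗ N.subtype)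
    (fun c => rfl) hin

theorem pb_ses_quot {π : F →ₗ[R] C} (hπ : Function.Surjective π) {y : R}
    (hy : IsSMulRegular C y) :
    IsSES (LinearMap.fst R F C ∘ₗ (pb π y).subtype)
      (Submodule.mkQ (y • (⊤ : Submodule R C)) ∘ₗ π) := by
  refine IsSES.mk' ?_ ?_ ?_
  · rintro ⟨⟨x, c⟩, hx⟩ ⟨⟨x', c'⟩, hx'⟩ hxx
    have h1 : x = x' := hxx
    rw [mem_pb] at hx hx'
    subst h1
    have h2 : c = c' := hy (hx.symm.trans hx')
    subst h2; rfl
  · exact (Submodule.mkQ_surjective _).comp hπ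
  · intro b
    rw [LinearMap.comp_apply, Submodule.mkQ_apply, Submodule.Quotient.mk_eq_zero,
      Submodule.mem_smul_pointwise_iff_exists]
    constructor
    · rintro ⟨c, -, hc⟩
      exact ⟨⟨(b, c), by rw [mem_pb]; exact hc.symm⟩, rfl⟩
    · rintro ⟨⟨⟨x, c⟩, hx⟩, rfl⟩
      rw [mem_pb] at hx
      exact ⟨c, trivial, hx.symm⟩

theorem pb_ses_pb {f : K →ₗ[R] P} {π : P →ₗ[R] C} (s : IsSES f π) {π' : F →ₗ[R] K}
    (hπ' : Function.Surjective π') (r : R) :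
    ∃ (u : pb π' r →ₗ[R] F × P) (v : F × P →ₗ[R] pb π r), IsSES u v := by
  refine ⟨(LinearMap.fst R F K).prod (-(f ∘ₗ LinearMap.snd R F K)) ∘ₗ (pb π' r).subtype,
    LinearMap.codRestrict _ (((f ∘ₗ π').coprod (r • LinearMap.id)).prod
      (π ∘ₗ LinearMap.snd R F P)) (fun x => by rw [mem_pb]; simp [s.zero]), IsSES.mk' ?_ ?_ ?_⟩
  · rintro ⟨⟨x, c⟩, hx⟩ ⟨⟨x', c'⟩, hx'⟩ hxx
    have h1 : x = x' := congrArg Prod.fst hxx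
    have h2 : -f c = -f c' := congrArg Prod.snd hxx
    have h2 : c = c' := s.inj (neg_injective h2)
    subst h1 h2; rfl
  · rintro ⟨⟨x, c⟩, hx⟩
    rw [mem_pb] at hx
    obtain ⟨p, rfl⟩ := s.surj c
    obtain ⟨k, hk⟩ := (s.iff (x - r • p)).1 (by simp [hx])
    obtain ⟨p1, rfl⟩ := hπ' k
    refine ⟨(p1, p), Subtype.ext (Prod.ext ?_ rfl)⟩
    change f (π' p1) + r • p = x
    rw [hk]; abel
  · rintro ⟨p1, p⟩
    constructor
    · intro h0
      have h1 : f (π' p1) + r • p = 0 := congrArg (fun z => z.1.1) h0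
      have h2 : π p = 0 := congrArg (fun z => z.1.2) h0
      obtain ⟨k, rfl⟩ := (s.iff p).1 h2
      refine ⟨⟨(p1, -k), ?_⟩, ?_⟩
      · rw [mem_pb]
        apply s.inj
        rw [eq_neg_of_add_eq_zero_left h1]; simp
      · change (p1, -f (-k)) = _
        simp
    · rintro ⟨⟨⟨x, k⟩, hx⟩, h⟩
      have h1 : x = p1 := congrArg Prod.fst h
      have h2 : -f k = p := congrArg Prod.snd h
      subst h1 h2
      rw [mem_pb] at hx
      refine Subtype.ext (Prod.ext ?_ ?_)
      · change f (π' x) + r • (-f k) = 0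
        rw [hx]; simp
      · change π (-f k) = 0
        simp [s.zero]

/-- finite modules on which `r` factors through a projective -/
def Fac1 (R : Type u) [CommRing R] (r : R) : Set (ModuleCat.{u} R) :=
  {M | Module.Finite R M ∧ Fac (projC R) r M}

theorem Fac.mono {𝒴 : Set (ModuleCat.{u} R)} (h : 𝒳 ⊆ 𝒴) {r : R} (hf : Fac 𝒳 r C) :
    Fac 𝒴 r C := by
  obtain ⟨X, i, j, hX, hh⟩ := hf
  exact ⟨X, i, j, h hX, hh⟩

theorem IsResolving.projC_sub (h𝒳 : IsResolving R 𝒳) : projC R ⊆ 𝒳 :=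
  fun M hM => h𝒳.proj_mem M hM.1 hM.2

theorem descend [IsNoetherianRing R] (h𝒳 : IsResolving R 𝒳) {r : R} (j : ℕ) :
    ∀ (C : Type u) [AddCommGroup C] [Module R C], In (TT (Fac1 R r) j) C →
    (∀ (_ : ℕ) (F : Type u) [AddCommGroup F] [Module R F] [Module.Finite R F]
      [Module.Projective R F] (π : F →ₗ[R] C), Function.Surjective π → In (TT 𝒳 j) (pb π r)) →
    In (TT 𝒳 j) C := by
  induction j with
  | zero =>
    intro C _ _ hC h
    have := hC.1
    obtain ⟨n, π, hπ⟩ := exists_cover (R := R) C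
    exact h𝒳.of_pb hπ (hC.2.mono h𝒳.projC_sub) (h n _ π hπ)
  | succ j ih =>
    intro C _ _ hC h
    obtain ⟨K, P, _, _, _, _, f, π, _, _, s, hK⟩ := Tc.elim hC
    refine Tc.mk s (ih K hK ?_)
    intro n F _ _ _ _ π' hπ'
    obtain ⟨u, v, s'⟩ := pb_ses_pb s hπ' r
    exact (TT.resolving h𝒳 j).schanuel s' (h n P π s.surj)

end Pb
end ResolvPaper

namespace ResolvPaper

section Depth
open scoped Pointwise
open Abelian IsLocalRing

variable {S : Type u} [CommRing S] [IsLocalRing S]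

theorem annihilator_residue : Module.annihilator S (ResidueField S) = maximalIdeal S := by
  ext x
  rw [Module.mem_annihilator]
  constructor
  · intro h
    have := h 1
    rw [Algebra.smul_def, mul_one] at this
    exact (residue_eq_zero_iff x).1 this
  · intro h y
    rw [Algebra.smul_def]
    have : algebraMap S (ResidueField S) x = 0 := (residue_eq_zero_iff x).2 h
    rw [this, zero_mul]

/-- `depth ≥ t` in terms of `Ext`. -/
def Dge (t : ℕ) (A : Type u) [AddCommGroup A] [Module S A] : Prop :=
  ∀ i < t, Subsingleton (Ext (residueMod S) (ModuleCat.of S A) i)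

variable {A B C F K : Type u} [AddCommGroup A] [Module S A] [AddCommGroup B] [Module S B]
  [AddCommGroup C] [Module S C] [AddCommGroup F] [Module S F] [AddCommGroup K] [Module S K]

theorem Dge.mono {t t' : ℕ} (h : t ≤ t') (hA : Dge (S := S) t' A) : Dge (S := S) t A :=
  fun i hi => hA i (hi.trans_le h)

/-- the short complex -/
abbrev sc {f : A →ₗ[S] B} {g : B →ₗ[S] C} (s : IsSES f g) : ShortComplex (ModuleCat.{u} S) :=
  ModuleCat.shortComplexOfCompEqZero f g (LinearMap.ext s.zero)

theorem sc_se {f : A →ₗ[S] B} {g : B →ₗ[S] C} (s : IsSES f g) : (sc s).ShortExact :=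
  ModuleCat.shortComplex_shortExact _ (fun b => by
    exact (s.iff b)) s.inj s.surj

theorem subsingleton_of_zero {G : Type*} [AddGroup G] (h : ∀ x : G, x = 0) : Subsingleton G :=
  ⟨fun a b => by rw [h a, h b]⟩

theorem ext_zero {X Y : ModuleCat.{u} S} {i : ℕ} (h : Subsingleton (Ext X Y i)) (x : Ext X Y i) :
    x = 0 := Subsingleton.elim _ _

theorem Dge.mid {t : ℕ} {f : A →ₗ[S] B} {g : B →ₗ[S] C} (s : IsSES f g)
    (hA : Dge (S := S) t A) (hC : Dge (S := S) t C) : Dge (S := S) t B := by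
  intro i hi
  refine subsingleton_of_zero fun x => ?_
  obtain ⟨y, hy⟩ := Ext.covariant_sequence_exact₂ (residueMod S) (sc_se s) x
    (ext_zero (hC i hi) _)
  rw [← hy, ext_zero (hA i hi) y, Ext.zero_comp]

theorem Dge.left {t : ℕ} {f : A →ₗ[S] B} {g : B →ₗ[S] C} (s : IsSES f g)
    (hB : Dge (S := S) (t+1) B) (hC : Dge (S := S) t C) : Dge (S := S) (t+1) A := by
  intro i hi
  refine subsingleton_of_zero fun x => ?_
  cases i with
  | zero =>
    have hf : Mono (ModuleCat.ofHom f) := (ModuleCat.mono_iff_injective _).2 s.inj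
    apply Ext.postcomp_mk₀_injective_of_mono (residueMod S) (ModuleCat.ofHom f)
    exact (hB 0 hi).elim _ _
  | succ i =>
    obtain ⟨y, hy⟩ := Ext.covariant_sequence_exact₁ (residueMod S) (sc_se s) x
      (ext_zero (hB _ hi) _) (rfl : i + 1 = i + 1)
    rw [← hy, ext_zero (hC i (by omega)) y, Ext.zero_comp]

theorem Dge.left' {t : ℕ} {f : A →ₗ[S] B} {g : B →ₗ[S] C} (s : IsSES f g)
    (hB : Dge (S := S) t B) (hC : Dge (S := S) t C) : Dge (S := S) t A := by
  cases t with
  | zero => intro i hi; omega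
  | succ t => exact Dge.left s hB (hC.mono (by omega))

theorem Dge.right {t : ℕ} {f : A →ₗ[S] B} {g : B →ₗ[S] C} (s : IsSES f g)
    (hA : Dge (S := S) (t+1) A) (hB : Dge (S := S) t B) : Dge (S := S) t C := by
  intro i hi
  refine subsingleton_of_zero fun x => ?_
  obtain ⟨y, hy⟩ := Ext.covariant_sequence_exact₃ (residueMod S) (sc_se s) x
    (rfl : i + 1 = i + 1) (ext_zero (hA _ (by omega)) _)
  rw [← hy, ext_zero (hB i hi) y, Ext.zero_comp]

theorem smul_ext_zero {r : S} (hr : r ∈ maximalIdeal S) {Y : ModuleCat.{u} S} {i : ℕ}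
    (x : Ext (residueMod S) Y i) : r • x = 0 := by
  have h := Ext.postcomp_smul_id_eq_zero_of_mem_annihilator (M := Y) (N := residueMod S) (r := r)
    (by rw [annihilator_residue]; exact hr) i
  have := congrArg (fun f => f.hom x) h
  simpa [Ext.mk₀_smul] using this

theorem smul_ses {y : S} (hy : IsSMulRegular C y) :
    IsSES (y • (LinearMap.id : C →ₗ[S] C)) (Submodule.mkQ (y • (⊤ : Submodule S C))) := by
  refine IsSES.mk' ?_ (Submodule.mkQ_surjective _) ?_
  · exact hy
  · intro b
    rw [Submodule.mkQ_apply, Submodule.Quotient.mk_eq_zero,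
      Submodule.mem_smul_pointwise_iff_exists]
    simp

theorem Dge.quot {t : ℕ} {y : S} (hy : IsSMulRegular C y) (hC : Dge (S := S) (t+1) C) :
    Dge (S := S) t (QuotSMulTop y C) :=
  Dge.right (smul_ses hy) hC (hC.mono (by omega))

theorem Dge.of_quot {t : ℕ} {y : S} (hm : y ∈ maximalIdeal S) (hy : IsSMulRegular C y)
    (hC : Dge (S := S) t (QuotSMulTop y C)) : Dge (S := S) (t+1) C := by
  intro i hi
  refine subsingleton_of_zero fun x => ?_
  have hx : x.comp (Ext.mk₀ (ModuleCat.ofHom (y • (LinearMap.id : C →ₗ[S] C)))) (add_zero i) = 0 := by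
    have : ModuleCat.ofHom (y • (LinearMap.id : C →ₗ[S] C)) = y • 𝟙 (ModuleCat.of S C) := rfl
    rw [this, Ext.mk₀_smul, Ext.comp_smul, Ext.comp_mk₀_id, smul_ext_zero hm]
  cases i with
  | zero =>
    have hf : Mono (ModuleCat.ofHom (y • (LinearMap.id : C →ₗ[S] C))) :=
      (ModuleCat.mono_iff_injective _).2 (smul_ses hy).inj
    apply Ext.postcomp_mk₀_injective_of_mono (residueMod S)
      (ModuleCat.ofHom (y • (LinearMap.id : C →ₗ[S] C)))
    exact hx.trans (map_zero _).symm
  | succ i =>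
    obtain ⟨z, hz⟩ := Ext.covariant_sequence_exact₁ (residueMod S) (sc_se (smul_ses hy)) x
      hx (rfl : i + 1 = i + 1)
    rw [← hz, ext_zero (hC i (by omega)) z, Ext.zero_comp]

theorem Dge_one_iff : Dge (S := S) 1 C ↔ Subsingleton (ResidueField S →ₗ[S] C) := by
  have : Dge (S := S) 1 C ↔ Subsingleton (Ext (residueMod S) (ModuleCat.of S C) 0) :=
    ⟨fun h => h 0 one_pos, fun h i hi => by
      obtain rfl : i = 0 := by omega
      exact h⟩
  rw [this]
  exact (Ext.addEquiv₀.trans ModuleCat.homAddEquiv).toEquiv.subsingleton_congr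

theorem Dge.exists_regular [IsNoetherianRing S] [Module.Finite S C] (h : Dge (S := S) 1 C) :
    ∃ y ∈ maximalIdeal S, IsSMulRegular C y := by
  obtain ⟨y, hy, h'⟩ := IsSMulRegular.subsingleton_linearMap_iff.1 (Dge_one_iff.1 h)
  rw [annihilator_residue] at hy
  exact ⟨y, hy, h'⟩

theorem exists_inj_of_not_Dge (h : ¬ Dge (S := S) 1 C) :
    ∃ f : ResidueField S →ₗ[S] C, Function.Injective f := by
  rw [Dge_one_iff] at h
  have : ∃ f : ResidueField S →ₗ[S] C, f ≠ 0 := by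
    by_contra hh
    push Not at hh
    exact h ⟨fun a b => by rw [hh a, hh b]⟩
  obtain ⟨f, hf⟩ := this
  refine ⟨f, ?_⟩
  rw [← LinearMap.ker_eq_bot, LinearMap.ker_eq_bot']
  intro x hx
  by_contra hx0
  apply hf
  ext y
  obtain ⟨a, ha⟩ := residue_surjective (y * x⁻¹)
  have hy : y = a • x := by
    rw [Algebra.smul_def]
    change y = residue S a * x
    rw [ha, mul_assoc, inv_mul_cancel₀ hx0, mul_one]
  rw [hy, map_smul, hx]; simp

theorem not_Dge_one_of_inj (f : ResidueField S →ₗ[S] C) (hf : Function.Injective f) :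
    ¬ Dge (S := S) 1 C := by
  rw [Dge_one_iff]
  intro h
  have : f = 0 := Subsingleton.elim _ _
  have h1 : (1 : ResidueField S) = 0 := hf (by simp [this])
  exact one_ne_zero h1

theorem Dge.of_pb {t : ℕ} {π : F →ₗ[S] C} (hπ : Function.Surjective π) {r : S}
    (hr : r ∈ maximalIdeal S) (h : Dge (S := S) t (pb π r)) : Dge (S := S) t C := by
  have s : IsSES (pb π r).subtype
      (π ∘ₗ LinearMap.fst S F C - (r • LinearMap.id) ∘ₗ LinearMap.snd S F C) :=
    ker_ses _ (fun c => by
      obtain ⟨x, rfl⟩ := hπ c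
      exact ⟨(x, 0), by simp⟩)
  intro i hi
  refine subsingleton_of_zero fun x => ?_
  let x' := x.comp (Ext.mk₀ (ModuleCat.ofHom (LinearMap.inr S F C))) (add_zero i)
  have hx' : x'.comp (Ext.mk₀ (sc s).g) (add_zero i) = 0 := by
    rw [Ext.comp_assoc_of_third_deg_zero, Ext.mk₀_comp_mk₀]
    have : ModuleCat.ofHom (LinearMap.inr S F C) ≫ (sc s).g = (-r) • 𝟙 (ModuleCat.of S C) := by
      ext c
      change π 0 - r • c = (-r) • c
      simp
    erw [this]
    rw [Ext.mk₀_smul, Ext.comp_smul, Ext.comp_mk₀_id, smul_ext_zero (neg_mem hr)]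
  obtain ⟨y, hy⟩ := Ext.covariant_sequence_exact₂ (residueMod S) (sc_se s) x' hx'
  rw [ext_zero (h i hi) y, Ext.zero_comp] at hy
  have h2 : x'.comp (Ext.mk₀ (ModuleCat.ofHom (LinearMap.snd S F C))) (add_zero i) = x := by
    rw [Ext.comp_assoc_of_third_deg_zero, Ext.mk₀_comp_mk₀]
    have : ModuleCat.ofHom (LinearMap.inr S F C) ≫ ModuleCat.ofHom (LinearMap.snd S F C)
      = 𝟙 (ModuleCat.of S C) := rfl
    rw [this, Ext.comp_mk₀_id]
  rw [← h2, ← hy, Ext.zero_comp]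

theorem Dge.of_subsingleton [Subsingleton C] (t : ℕ) : Dge (S := S) t C := by
  intro i hi
  refine subsingleton_of_zero fun x => ?_
  have : 𝟙 (ModuleCat.of S C) = 0 := by
    ext c; exact Subsingleton.elim (α := C) _ _
  rw [← Ext.comp_mk₀_id x, this, Ext.mk₀_zero, Ext.comp_zero]

theorem weaklyRegular_of_subsingleton {R M : Type*} [CommRing R] [AddCommGroup M] [Module R M]
    [Subsingleton M] (rs : List R) : RingTheory.Sequence.IsWeaklyRegular M rs := by
  rw [RingTheory.Sequence.isWeaklyRegular_iff]
  intro i hi a b _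
  exact Subsingleton.elim _ _

theorem le_depthE_iff [IsNoetherianRing S] [Module.Finite S C] (t : ℕ) :
    (t : ℕ∞) ≤ depthE S (maximalIdeal S) C ↔ Dge (S := S) t C := by
  rcases subsingleton_or_nontrivial C with hC | hC
  · refine ⟨fun _ => Dge.of_subsingleton t, fun _ => le_sSup ?_⟩
    exact ⟨List.replicate t 0, fun r hr => by rw [List.eq_of_mem_replicate hr]; exact zero_mem _,
      weaklyRegular_of_subsingleton _, by simp⟩
  have lt : maximalIdeal S • (⊤ : Submodule S C) < ⊤ := by
    rw [lt_top_iff_ne_top]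
    exact (Submodule.top_ne_ideal_smul_of_le_jacobson_annihilator
      (IsLocalRing.maximalIdeal_le_jacobson _)).symm
  have supp : Module.support S (ResidueField S) = PrimeSpectrum.zeroLocus (maximalIdeal S) := by
    rw [Module.support_eq_zeroLocus, annihilator_residue]
  constructor
  · intro h
    cases t with
    | zero => intro i hi; omega
    | succ t =>
      have h' : (t : ℕ∞) < depthE S (maximalIdeal S) C :=
        lt_of_lt_of_le (by exact_mod_cast Nat.lt_succ_self t) h
      obtain ⟨_, ⟨rs, hrs, hw, rfl⟩, hlt⟩ := lt_sSup_iff.1 h'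
      have hlt : t < rs.length := by exact_mod_cast hlt
      intro i hi
      exact ModuleCat.subsingleton_ext_of_exists_isRegular (maximalIdeal S) (residueMod S)
        (by exact supp.le) (ModuleCat.of S C) lt rs hrs
        ((isRegular_iff_isWeaklyRegular_of_subset_maximalIdeal hrs).2 hw) i (by omega)
  · intro h
    obtain ⟨rs, hl, hm, hreg⟩ := ModuleCat.exists_isRegular_of_exists_subsingleton_ext
      (maximalIdeal S) t (ModuleCat.of S C) lt (residueMod S) (by exact supp) h
    refine le_sSup ⟨rs, hm, hreg.toIsWeaklyRegular, by rw [hl]⟩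

end Depth
end ResolvPaper

namespace ResolvPaper

section Local
open scoped Pointwise
open IsLocalRing

/-- modules locally free on the punctured spectrum -/
def LF (S : Type u) [CommRing S] [IsLocalRing S] : Set (ModuleCat.{u} S) :=
  ⋂ y : maximalIdeal S, locW (projC S) (Submonoid.powers y.1)

variable {S : Type u} [CommRing S] [IsLocalRing S] [IsNoetherianRing S]

theorem LF.resolving : IsResolving S (LF S) :=
  iInter_resolving 0 (fun _ => locW.resolving projC.resolving _)

theorem mem_LF {A : Type u} [AddCommGroup A] [Module S A] [Module.Finite S A] :
    In (LF S) A ↔ ∀ y ∈ maximalIdeal S, ∃ a : ℕ, Fac (projC S) (y ^ a) A := by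
  simp only [In, LF, Set.mem_iInter, locW]
  constructor
  · intro h y hy
    obtain ⟨-, _, ⟨a, rfl⟩, hf⟩ := h ⟨y, hy⟩
    exact ⟨a, hf⟩
  · intro h y
    obtain ⟨a, ha⟩ := h y.1 y.2
    exact ⟨‹_›, _, ⟨a, rfl⟩, ha⟩

theorem residue_LF : In (LF S) (ResidueField S) := by
  rw [mem_LF]
  intro y hy
  refine ⟨1, Fac.mk (X := PUnit) projC.resolving.proj 0 0 ?_⟩
  intro m
  rw [← annihilator_residue, Module.mem_annihilator] at hy
  simp [hy]

theorem TT_LF_fac {y : S} (hy : y ∈ maximalIdeal S) (j : ℕ) :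
    ∀ (C : Type u) [AddCommGroup C] [Module S C], In (TT (LF S) j) C →
    ∃ a : ℕ, In (TT (Fac1 S (y ^ (a+1))) j) C := by
  induction j with
  | zero =>
    intro C _ _ hC
    have := LF.resolving.fin hC
    obtain ⟨a, ha⟩ := mem_LF.1 hC y hy
    refine ⟨a, this, ?_⟩
    rw [pow_succ']
    exact ha.mul y
  | succ j ih =>
    intro C _ _ hC
    obtain ⟨K, P, _, _, _, _, f, π, _, _, s, hK⟩ := Tc.elim hC
    obtain ⟨a, ha⟩ := ih K hK
    exact ⟨a, Tc.mk s ha⟩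

theorem TT_LF_quot (j : ℕ) :
    ∀ (E Q : Type u) [AddCommGroup E] [Module S E] [AddCommGroup Q] [Module S Q]
    (f : ResidueField S →ₗ[S] E) (g : E →ₗ[S] Q), IsSES f g → In (TT (LF S) j) E →
    In (TT (LF S) j) Q := by
  cases j with
  | zero =>
    intro E Q _ _ _ _ f g s hE
    have := LF.resolving.fin hE
    have : Module.Finite S Q := Module.Finite.of_surjective g s.surj
    refine mem_LF.2 fun y hy => ?_
    obtain ⟨a, ha⟩ := mem_LF.1 hE y hy
    obtain ⟨X, _, _, i, j, hX, hij⟩ := ha.elim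
    obtain ⟨v, hv⟩ := s.desc (y • LinearMap.id) (by
      intro x
      rw [← annihilator_residue, Module.mem_annihilator] at hy
      simp [← map_smul, hy])
    refine ⟨a + 1, Fac.mk hX (i ∘ₗ v) (g ∘ₗ j) ?_⟩
    intro m
    obtain ⟨e, rfl⟩ := s.surj m
    simp [hv, hij, smul_smul, pow_succ]
    rw [mul_comm]
  | succ j =>
    intro E Q _ _ _ _ f g s hE
    have := (TT.resolving LF.resolving (j+1)).fin hE
    obtain ⟨n, p, hp⟩ := exists_cover (R := S) E
    have h := TT.resolving (LF.resolving (S := S)) j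
    have hK := h.schanuel (ker_ses p hp) hE
    obtain ⟨u, v, s'⟩ := ses_comp p hp s
    have hK2 := h.ext s' hK (TT.mono LF.resolving (Nat.zero_le j) residue_LF)
    exact Tc.mk (ker_ses (g ∘ₗ p) (s.surj.comp hp)) hK2

theorem quot_mem_Tc {R : Type u} [CommRing R] [IsNoetherianRing R] {𝒳 : Set (ModuleCat.{u} R)}
    (h : IsResolving R 𝒳)
    {E : Type u} [AddCommGroup E] [Module R E] {y : R} (hy : IsSMulRegular E y)
    (hE : In 𝒳 E) : In (Tc 𝒳) (QuotSMulTop y E) := by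
  have := h.fin hE
  obtain ⟨n, p, hp⟩ := exists_cover (R := R) E
  exact Tc.mk (pb_ses_quot hp hy)
    (h.ext (pb_ses (ker_ses p hp) y) (h.syz (ker_ses p hp) hE) hE)

theorem descend_quot {R : Type u} [CommRing R] [IsNoetherianRing R] {𝒳 : Set (ModuleCat.{u} R)}
    (h : IsResolving R 𝒳) {j : ℕ}
    {E : Type u} [AddCommGroup E] [Module R E] {y : R} (hy : IsSMulRegular E y)
    (hE : In (TT (Fac1 R y) j) E) (hq : In (TT 𝒳 (j+1)) (QuotSMulTop y E)) : In (TT 𝒳 j) E := by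
  refine descend h j E hE ?_
  intro _ F _ _ _ _ π hπ
  exact (TT.resolving h j).schanuel (pb_ses_quot hπ hy) hq

theorem cok_ses {R : Type u} [CommRing R] {A B : Type u} [AddCommGroup A] [Module R A]
    [AddCommGroup B] [Module R B] (f : A →ₗ[R] B) (hf : Function.Injective f) :
    IsSES f (LinearMap.range f).mkQ := ⟨hf, Submodule.mkQ_surjective _, by simp⟩

variable {𝒴 : Set (ModuleCat.{u} S)}

theorem claimQ_aux (h : IsResolving S 𝒴) (C0 : Type u) [AddCommGroup C0] [Module S C0]
    [Module.Finite S C0] (D : Submodule S C0) :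
    ∀ (E : Type u) [AddCommGroup E] [Module S E] (g : C0 →ₗ[S] E), Function.Surjective g →
    LinearMap.ker g = D → ∀ j, In (TT 𝒴 j) (ResidueField S) → In (TT (LF S) j) E →
    In (TT 𝒴 j) E := by
  induction D using IsNoetherian.induction with
  | hgt D ih =>
    intro E _ _ g hg hD j hk hE
    have := (TT.resolving LF.resolving j).fin hE
    by_cases hd : Dge (S := S) 1 E
    · rcases subsingleton_or_nontrivial E with hs | hs
      · exact (TT.resolving h j).proj
      · obtain ⟨y, hy, hreg⟩ := hd.exists_regular
        obtain ⟨a, ha⟩ := TT_LF_fac hy j E hE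
        have hreg' : IsSMulRegular E (y ^ (a+1)) := hreg.pow _
        refine descend_quot h hreg' ha ?_
        refine ih (LinearMap.ker (Submodule.mkQ (y ^ (a+1) • (⊤ : Submodule S E)) ∘ₗ g)) ?_
          _ (Submodule.mkQ (y ^ (a+1) • (⊤ : Submodule S E)) ∘ₗ g)
          ((Submodule.mkQ_surjective _).comp hg) rfl (j+1) (TT.mono h (Nat.le_succ j) hk)
          (quot_mem_Tc (TT.resolving LF.resolving j) hreg' hE)
        obtain ⟨e, he⟩ := exists_ne (0 : E)
        obtain ⟨c, hc⟩ := hg (y ^ (a+1) • e)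
        rw [← hD]
        refine lt_of_le_of_ne (LinearMap.ker_le_ker_comp _ _) fun heq => ?_
        have h1 : c ∈ LinearMap.ker (Submodule.mkQ (y ^ (a+1) • (⊤ : Submodule S E)) ∘ₗ g) := by
          rw [LinearMap.mem_ker, LinearMap.comp_apply, hc, Submodule.mkQ_apply,
            Submodule.Quotient.mk_eq_zero]
          exact Submodule.smul_mem_pointwise_smul _ _ _ trivial
        rw [← heq, LinearMap.mem_ker, hc] at h1
        exact he (hreg' (h1.trans (smul_zero _).symm))
    · obtain ⟨f, hf⟩ := exists_inj_of_not_Dge hd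
      have s := cok_ses f hf
      refine (TT.resolving h j).ext s hk ?_
      refine ih (LinearMap.ker ((LinearMap.range f).mkQ ∘ₗ g)) ?_ _ ((LinearMap.range f).mkQ ∘ₗ g)
        (s.surj.comp hg) rfl j hk (TT_LF_quot j _ _ f _ s hE)
      obtain ⟨c, hc⟩ := hg (f 1)
      rw [← hD]
      refine lt_of_le_of_ne (LinearMap.ker_le_ker_comp _ _) fun heq => ?_
      have h1 : c ∈ LinearMap.ker ((LinearMap.range f).mkQ ∘ₗ g) := by
        rw [LinearMap.mem_ker, LinearMap.comp_apply, hc, s.zero]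
      rw [← heq, LinearMap.mem_ker, hc] at h1
      exact one_ne_zero (hf (h1.trans (map_zero f).symm))

theorem claimQ (h : IsResolving S 𝒴) {E : Type u} [AddCommGroup E] [Module S E] {j : ℕ}
    (hk : In (TT 𝒴 j) (ResidueField S)) (hE : In (TT (LF S) j) E) : In (TT 𝒴 j) E := by
  have := (TT.resolving LF.resolving j).fin hE
  exact claimQ_aux h E _ E LinearMap.id (fun x => ⟨x, rfl⟩) rfl j hk hE

theorem claimE (h : IsResolving S 𝒴) (t : ℕ) : ∀ (j : ℕ) (C : Type u) [AddCommGroup C] [Module S C],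
    In (TT (LF S) j) C → Dge (S := S) t C → In (TT 𝒴 (j + t)) (ResidueField S) →
    In (TT 𝒴 j) C := by
  induction t with
  | zero => intro j C _ _ hC _ hk; exact claimQ h hk hC
  | succ t ih =>
    intro j C _ _ hC hd hk
    have := (TT.resolving LF.resolving j).fin hC
    obtain ⟨y, hy, hreg⟩ := (hd.mono (by omega : 1 ≤ t + 1)).exists_regular
    obtain ⟨a, ha⟩ := TT_LF_fac hy j C hC
    have hreg' : IsSMulRegular C (y ^ (a+1)) := hreg.pow _
    refine descend_quot h hreg' ha (ih (j+1) _ (quot_mem_Tc (TT.resolving LF.resolving j) hreg' hC)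
      (hd.quot hreg') ?_)
    rwa [show j + 1 + t = j + (t + 1) by omega]

theorem claimG (h : IsResolving S 𝒴) (t : ℕ) : ∀ (j : ℕ) (C : Type u) [AddCommGroup C] [Module S C],
    In (TT (LF S) j) C → In (TT 𝒴 j) C → Dge (S := S) t C → ¬ Dge (S := S) (t+1) C →
    In (TT 𝒴 (j + t + 1)) (ResidueField S) → In (TT 𝒴 (j + t)) (ResidueField S) := by
  induction t with
  | zero =>
    intro j C _ _ hC hC' _ hd hk
    obtain ⟨f, hf⟩ := exists_inj_of_not_Dge hd
    have s := cok_ses f hf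
    have h1 := TT.mono LF.resolving (Nat.le_succ j) (TT_LF_quot j _ _ f _ s hC)
    have h2 := claimQ h hk h1
    exact (TT.resolving h j).left s hC' h2
  | succ t ih =>
    intro j C _ _ hC hC' hd hd' hk
    have := (TT.resolving LF.resolving j).fin hC
    obtain ⟨y, hy, hreg⟩ := (hd.mono (by omega : 1 ≤ t + 1)).exists_regular
    have := ih (j+1) _ (quot_mem_Tc (TT.resolving LF.resolving j) hreg hC)
      (quot_mem_Tc (TT.resolving h j) hreg hC') (hd.quot hreg) (fun hh => hd' (hh.of_quot hy hreg))
      (by rwa [show j + 1 + t + 1 = j + (t + 1) + 1 by omega])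
    rwa [show j + (t + 1) = j + 1 + t by omega]

theorem pb_sAnn {R : Type u} [CommRing R] [IsNoetherianRing R] {F C : Type u} [AddCommGroup F]
    [Module R F] [AddCommGroup C] [Module R C] [Module.Finite R F] [Module.Projective R F]
    (π : F →ₗ[R] C) (hπ : Function.Surjective π) (r : R) :
    (sAnn R C).radical ⊔ Ideal.span {r} ≤ (sAnn R (pb π r)).radical := by
  have hC : Module.Finite R C := Module.Finite.of_surjective π hπ
  refine sup_le ?_ ?_
  · rw [Ideal.radical_le_radical_iff]
    intro x hx
    have hr := locW.resolving (R := R) projC.resolving (Submonoid.powers x)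
    have h1 : In (locW (projC R) (Submonoid.powers x)) C := ⟨hC, x, ⟨1, pow_one x⟩, hx⟩
    obtain ⟨-, _, ⟨a, rfl⟩, ha⟩ :=
      hr.ext (pb_ses (ker_ses π hπ) r) (hr.syz (ker_ses π hπ) h1) h1
    exact ⟨a, ha⟩
  · rw [Ideal.span_singleton_le_iff_mem]
    exact Ideal.le_radical (pb_fac π r)

theorem step1 (h : IsResolving S 𝒴) (t : ℕ) (I : Ideal S) :
    ∀ (Y : Type u) [AddCommGroup Y] [Module S Y], (sAnn S Y).radical = I → In 𝒴 Y →
    ¬ Dge (S := S) t Y → ∃ (Y' : Type u) (_ : AddCommGroup Y') (_ : Module S Y'),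
      In 𝒴 Y' ∧ In (LF S) Y' ∧ ¬ Dge (S := S) t Y' := by
  induction I using IsNoetherian.induction with
  | hgt I ih =>
    intro Y _ _ hI hY hd
    have := h.fin hY
    by_cases hm : maximalIdeal S ≤ (sAnn S Y).radical
    · refine ⟨Y, _, _, hY, mem_LF.2 fun y hy => hm hy, hd⟩
    · obtain ⟨r, hr, hr'⟩ := SetLike.not_le_iff_exists.1 hm
      obtain ⟨n, p, hp⟩ := exists_cover (R := S) Y
      have hsub := pb_sAnn p hp r
      refine ih _ ?_ (pb p r) rfl
        (h.ext (pb_ses (ker_ses p hp) r) (h.syz (ker_ses p hp) hY) hY)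
        (fun hh => hd (hh.of_pb hp hr))
      rw [← hI]
      refine lt_of_le_of_ne (le_sup_left.trans hsub) fun heq => hr' ?_
      rw [heq]
      exact hsub (Ideal.mem_sup_right (Ideal.mem_span_singleton_self r))

theorem local_main (h : IsResolving S 𝒴) {n : ℕ} (hk : In (TT 𝒴 n) (ResidueField S))
    {N : Type u} [AddCommGroup N] [Module S N] (hN : In (LF S) N)
    (hd : (∀ t, Dge (S := S) t N) ∨ ∃ t, Dge (S := S) t N ∧ ∃ (Y : ModuleCat.{u} S), Y ∈ 𝒴 ∧
      ¬ Dge (S := S) (t+1) Y) : In 𝒴 N := by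
  rcases hd with hd | ⟨t, ht, Y0, hY0, hd0⟩
  · exact claimE h n 0 N hN (hd n) (by simpa using hk)
  · obtain ⟨Y, _, _, hY, hYL, hd⟩ := step1 h (t+1) _ Y0 rfl hY0 hd0
    classical
    have hex : ∃ t, ¬ Dge (S := S) (t+1) Y := ⟨t, hd⟩
    let t' := Nat.find hex
    have h1 : ¬ Dge (S := S) (t'+1) Y := Nat.find_spec hex
    have h2 : t' ≤ t := Nat.find_min' hex hd
    have h3 : Dge (S := S) t' Y := by
      rcases Nat.eq_zero_or_pos t' with h0 | h0
      · rw [h0]; intro i hi; omega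
      · have := Nat.find_min hex (Nat.sub_lt h0 one_pos)
        rw [not_not] at this
        exact this.mono (by omega)
    have key : ∀ j, In (TT 𝒴 (j + t')) (ResidueField S) → In (TT 𝒴 (0 + t')) (ResidueField S) := by
      intro j
      induction j with
      | zero => exact id
      | succ j ih =>
        intro hj
        refine ih (claimG h t' j Y (TT.mono LF.resolving (Nat.zero_le j) hYL)
          (TT.mono h (Nat.zero_le j) hY) h3 h1 ?_)
        rwa [show j + t' + 1 = j + 1 + t' by omega]
    have hk' := key n (TT.mono h (by omega) hk)
    exact claimE h t 0 N hN ht (TT.mono h (by omega) hk')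

end Local
end ResolvPaper

namespace ResolvPaper

section Loc

variable {R : Type u} [CommRing R]

/-- localization of a resolving subcategory -/
def LY (𝒳 : Set (ModuleCat.{u} R)) (W : Submonoid R) : Set (ModuleCat.{u} (Localization W)) :=
  {N | Module.Finite (Localization W) N ∧ ∃ L : ModuleCat.{u} R, L ∈ locW 𝒳 W ∧
    ∃ (i : N →ₗ[Localization W] LocalizedModule W L) (ρ : LocalizedModule W L →ₗ[Localization W] N),
      ∀ a, ρ (i a) = a}

variable {𝒳 : Set (ModuleCat.{u} R)} {W : Submonoid R}

theorem LY.retract {A B : Type u} [AddCommGroup A] [Module (Localization W) A]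
    [AddCommGroup B] [Module (Localization W) B] (i : A →ₗ[Localization W] B)
    (ρ : B →ₗ[Localization W] A) (h : ∀ a, ρ (i a) = a) (hB : In (LY 𝒳 W) B) : In (LY 𝒳 W) A := by
  obtain ⟨hf, L, hL, i', ρ', h'⟩ := hB
  have : Module.Finite (Localization W) B := hf
  refine ⟨Module.Finite.of_surjective ρ (fun a => ⟨i a, h a⟩), L, hL, i'.comp i, ρ.comp ρ', ?_⟩
  intro a
  change ρ (ρ' (i' (i a))) = a
  rw [h', h]

theorem T1 [IsNoetherianRing R] {N : Type u} [AddCommGroup N] [Module R N]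
    [Module (Localization W) N]
    [IsScalarTower R (Localization W) N] {L : Type u} [AddCommGroup L] [Module R L]
    [hL : Module.Finite R L] (φ : L →ₗ[R] N) [IsLocalizedModule W φ] (hN : In (LY 𝒳 W) N) :
    In (locW 𝒳 W) L := by
  obtain ⟨hf, L', ⟨hL', r, hr, hfac⟩, i, ρ, h⟩ := hN
  have : Module.Finite R L' := hL'
  have := Module.finitePresentation_of_finite R L
  have := Module.finitePresentation_of_finite R L'
  let i0 : N →ₗ[R] LocalizedModule W L' := i.restrictScalars R
  let ρ0 : LocalizedModule W L' →ₗ[R] N := ρ.restrictScalars R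
  have h0 : ∀ a, ρ0 (i0 a) = a := h
  obtain ⟨u, s, hu⟩ := Module.FinitePresentation.exists_lift_of_isLocalizedModule W
    (LocalizedModule.mkLinearMap W L') (i0 ∘ₗ φ)
  obtain ⟨v, s', hv⟩ := Module.FinitePresentation.exists_lift_of_isLocalizedModule W
    φ (ρ0 ∘ₗ LocalizedModule.mkLinearMap W L')
  have hu' : ∀ l, LocalizedModule.mkLinearMap W L' (u l) = (s : R) • i0 (φ l) :=
    fun l => LinearMap.congr_fun hu l
  have hv' : ∀ l, φ (v l) = (s' : R) • ρ0 (LocalizedModule.mkLinearMap W L' l) :=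
    fun l => LinearMap.congr_fun hv l
  obtain ⟨t, ht⟩ := Module.Finite.exists_smul_of_comp_eq_of_isLocalizedModule W φ
    (v ∘ₗ u) (((s' : R) * s) • LinearMap.id) (by
      ext l
      simp only [LinearMap.comp_apply, hv', hu', map_smul, h0, LinearMap.smul_apply,
        LinearMap.id_apply, smul_smul])
  have ht' : ∀ l, (t : R) • v (u l) = (t : R) • ((s' : R) * s) • l :=
    fun l => LinearMap.congr_fun ht l
  obtain ⟨X, _, _, i', j', hX, hij⟩ := hfac.elim
  refine ⟨hL, r * (t * (s' * s)), W.mul_mem hr (W.mul_mem t.2 (W.mul_mem s'.2 s.2)), ?_⟩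
  refine Fac.mk hX (i' ∘ₗ u) ((t : R) • (v ∘ₗ j')) ?_
  intro m
  simp only [LinearMap.comp_apply, LinearMap.smul_apply, hij, map_smul]
  rw [smul_comm, ht', mul_smul r, mul_smul (t : R)]

theorem T2 {N : Type u} [AddCommGroup N] [Module R N]
    [Module (Localization W) N]
    [IsScalarTower R (Localization W) N] {L : Type u} [AddCommGroup L] [Module R L]
    (φ : L →ₗ[R] N) [IsLocalizedModule W φ] (hL : In (locW 𝒳 W) L) : In (LY 𝒳 W) N := by
  have : Module.Finite R L := hL.1
  let e : LocalizedModule W L ≃ₗ[Localization W] N :=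
    LinearEquiv.extendScalarsOfIsLocalization W (Localization W) (IsLocalizedModule.iso W φ)
  exact ⟨Module.Finite.of_isLocalizedModule W (Rₚ := Localization W) φ, .of R L, hL,
    e.symm.toLinearMap, e.toLinearMap, fun a => e.apply_symm_apply a⟩

theorem lattice_loc {N : Type u} [AddCommGroup N] [Module R N]
    [Module (Localization W) N]
    [IsScalarTower R (Localization W) N] (L : Submodule R N) (hL : ∀ x : N, ∃ t : W, (t : R) • x ∈ L) :
    IsLocalizedModule W L.subtype where
  map_units := fun w => by
    have hu : IsUnit (algebraMap R (Localization W) w) := IsLocalization.map_units _ w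
    obtain ⟨c, hc⟩ := hu
    rw [Module.End.isUnit_iff]
    constructor
    · intro a b hab
      have hab' : (w : R) • a = (w : R) • b := hab
      rw [← algebraMap_smul (Localization W) (w : R) a, ← algebraMap_smul (Localization W) (w : R) b,
        ← hc] at hab'
      have := congrArg (fun z => (↑c⁻¹ : Localization W) • z) hab'
      simpa [smul_smul] using this
    · intro b
      refine ⟨(↑c⁻¹ : Localization W) • b, ?_⟩
      change (w : R) • ((↑c⁻¹ : Localization W) • b) = b
      rw [← algebraMap_smul (Localization W) (w : R), ← hc, smul_smul]
      simp
  surj := fun y => by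
    obtain ⟨t, ht⟩ := hL y
    exact ⟨(⟨_, ht⟩, t), rfl⟩
  exists_of_eq := fun {a b} hab => ⟨1, by rw [Subtype.ext hab]⟩

theorem exists_lattice {N : Type u} [AddCommGroup N] [Module R N]
    [Module (Localization W) N] [Module.Finite (Localization W) N]
    [IsScalarTower R (Localization W) N] : ∃ L : Submodule R N, L.FG ∧ ∀ x : N, ∃ t : W, (t : R) • x ∈ L := by
  obtain ⟨s, hs⟩ := Module.Finite.fg_top (R := Localization W) (M := N)
  refine ⟨Submodule.span R s, ⟨s, rfl⟩, fun x => ?_⟩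
  exact multiple_mem_span_of_mem_localization_span W (Localization W) (s : Set N) x (by rw [hs]; trivial)

theorem LY.lattices [IsNoetherianRing R] {A B C : Type u} [AddCommGroup A] [AddCommGroup B]
    [AddCommGroup C] [Module (Localization W) A]
    [Module (Localization W) B] [Module (Localization W) C] [Module.Finite (Localization W) B]
    {f : A →ₗ[Localization W] B} {g : B →ₗ[Localization W] C} (s : IsSES f g) :
    ∃ (LA LB LC : Type u) (_ : AddCommGroup LA) (_ : AddCommGroup LB) (_ : AddCommGroup LC)
      (_ : Module R LA) (_ : Module R LB) (_ : Module R LC) (f' : LA →ₗ[R] LB) (g' : LB →ₗ[R] LC),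
      IsSES f' g' ∧ (In (locW 𝒳 W) LA ↔ In (LY 𝒳 W) A) ∧ (In (locW 𝒳 W) LB ↔ In (LY 𝒳 W) B) ∧
      (In (locW 𝒳 W) LC ↔ In (LY 𝒳 W) C) := by
  let : Module R A := Module.compHom A (algebraMap R (Localization W))
  let : Module R B := Module.compHom B (algebraMap R (Localization W))
  let : Module R C := Module.compHom C (algebraMap R (Localization W))
  have : IsScalarTower R (Localization W) A := IsScalarTower.of_algebraMap_smul fun _ _ => rfl
  have : IsScalarTower R (Localization W) B := IsScalarTower.of_algebraMap_smul fun _ _ => rfl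
  have : IsScalarTower R (Localization W) C := IsScalarTower.of_algebraMap_smul fun _ _ => rfl
  obtain ⟨L, hL, hfull⟩ := exists_lattice (R := R) (W := W) (N := B)
  let f0 : A →ₗ[R] B := f.restrictScalars R
  let g0 : B →ₗ[R] C := g.restrictScalars R
  have hLf : Module.Finite R L := Module.Finite.iff_fg.2 hL
  let LA := L.comap f0
  let LC := L.map g0
  let f' : LA →ₗ[R] L := f0.restrict (fun x hx => hx)
  let g' : L →ₗ[R] LC := g0.restrict (fun x hx => Submodule.mem_map_of_mem hx)
  have s' : IsSES f' g' := by
    refine IsSES.mk' ?_ ?_ ?_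
    · intro a b hab
      exact Subtype.ext (s.inj (congrArg Subtype.val hab))
    · rintro ⟨_, x, hx, rfl⟩
      exact ⟨⟨x, hx⟩, rfl⟩
    · rintro ⟨b, hb⟩
      constructor
      · intro h
        obtain ⟨a, rfl⟩ := (s.iff b).1 (congrArg Subtype.val h)
        exact ⟨⟨a, hb⟩, rfl⟩
      · rintro ⟨a, ha⟩
        rw [← ha]
        exact Subtype.ext (s.zero a.1)
  have fA : Module.Finite R LA := Module.Finite.of_injective f' s'.inj
  have fC : Module.Finite R LC := Module.Finite.of_surjective g' s'.surj
  have := lattice_loc (W := W) L hfull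
  have := lattice_loc (W := W) LA (fun x => by
    obtain ⟨t, ht⟩ := hfull (f0 x)
    refine ⟨t, ?_⟩
    rw [Submodule.mem_comap, map_smul]; exact ht)
  have := lattice_loc (W := W) LC (fun x => by
    obtain ⟨b, rfl⟩ := s.surj x
    obtain ⟨t, ht⟩ := hfull b
    refine ⟨t, ?_⟩
    refine ⟨_, ht, ?_⟩
    rw [map_smul]; rfl)
  exact ⟨LA, L, LC, _, _, _, _, _, _, f', g', s', ⟨T2 LA.subtype, T1 LA.subtype⟩,
    ⟨T2 L.subtype, T1 L.subtype⟩, ⟨T2 LC.subtype, T1 LC.subtype⟩⟩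

theorem LY.proj [IsNoetherianRing R] (h : IsResolving R 𝒳) {A : Type u} [AddCommGroup A]
    [Module (Localization W) A] [Module.Finite (Localization W) A]
    [Module.Projective (Localization W) A] : In (LY 𝒳 W) A := by
  obtain ⟨n, g, hg⟩ := Module.Finite.exists_fin' (Localization W) A
  obtain ⟨t, ht⟩ := Module.projective_lifting_property g LinearMap.id hg
  refine LY.retract t g (fun a => LinearMap.congr_fun ht a) ?_
  let φ : (Fin n → R) →ₗ[R] (Fin n → Localization W) :=
    LinearMap.pi fun i => Algebra.linearMap R (Localization W) ∘ₗ LinearMap.proj i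
  have : IsLocalizedModule W φ := inferInstance
  exact T2 φ (sub_locW h W h.proj)

theorem LY.resolving [IsNoetherianRing R] (h : IsResolving R 𝒳) :
    IsResolving (Localization W) (LY 𝒳 W) := by
  have h𝒵 := locW.resolving h W
  refine IsResolving.mk_of (fun A _ _ hA => hA.1) ?_ ?_ ?_ ?_
  · intro A B _ _ _ _ i ρ hi hB
    exact LY.retract i ρ hi hB
  · intro A _ _ _ _
    exact LY.proj h
  · intro A B C _ _ _ _ _ _ f g s hA hC
    have := finite_of_ses s hA.1 hC.1
    obtain ⟨LA, LB, LC, _, _, _, _, _, _, f', g', s', eA, eB, eC⟩ := LY.lattices (𝒳 := 𝒳) s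
    exact eB.1 (h𝒵.ext s' (eA.2 hA) (eC.2 hC))
  · intro A B C _ _ _ _ _ _ _ _ _ f g s hC
    obtain ⟨LA, LB, LC, _, _, _, _, _, _, f', g', s', eA, eB, eC⟩ := LY.lattices (𝒳 := 𝒳) s
    exact eA.1 (h𝒵.left s' (eB.2 (LY.proj h)) (h𝒵.sub_Tc (eC.2 hC)))

theorem IsResolving.pi (h : IsResolving R 𝒳) : ∀ (n : ℕ) (Y : Fin n → Type u)
    [∀ i, AddCommGroup (Y i)] [∀ i, Module R (Y i)], (∀ i, In 𝒳 (Y i)) → In 𝒳 (∀ i, Y i)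
  | 0, Y, _, _, _ => by
    have : Subsingleton (∀ i, Y i) := inferInstance
    exact h.proj
  | n+1, Y, _, _, hY =>
    h.iso (Fin.consLinearEquiv R Y) (h.prod (hY 0) (IsResolving.pi h n _ (fun i => hY i.succ)))

theorem minSyz_TT {S : Type u} [CommRing S] [IsLocalRing S] {𝒴 : Set (ModuleCat.{u} S)}
    (h : IsResolving S 𝒴) (n : ℕ) : ∀ (M K : ModuleCat.{u} S), IsMinSyz S n M K → K ∈ 𝒴 →
    In (TT 𝒴 n) M := by
  induction n with
  | zero =>
    rintro M K ⟨e⟩ hK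
    exact h.iso e hK
  | succ n ih =>
    rintro M K ⟨F, g, K', i, hF, hF', hg, -, hi, hr, hs⟩ hK
    exact Tc.mk (A := K') (B := F) (f := i) (g := g) ⟨hi, hg, hr⟩ (ih K' K hs hK)

theorem addLocal_LY [IsNoetherianRing R] (h : IsResolving R 𝒳) {p : PrimeSpectrum R}
    {N : ModuleCat.{u} (Localization.AtPrime p.asIdeal)} (hN : memAddLocal R 𝒳 p N) :
    N ∈ LY 𝒳 p.asIdeal.primeCompl := by
  obtain ⟨n, X, hX, N', ⟨e⟩⟩ := hN
  have hL := LY.resolving (W := p.asIdeal.primeCompl) h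
  refine hL.fst (A := N) (B := N') (hL.iso e.symm (hL.pi n _ fun i => ?_))
  exact T2 (LocalizedModule.mkLinearMap _ _) (sub_locW h _ (hX i))

theorem minPrime_pow {I p : Ideal R} (hp : p ∈ I.minimalPrimes) {y : R} (hy : y ∈ p) :
    ∃ s ∉ p, ∃ a : ℕ, s * y ^ a ∈ I := by
  have hpp : p.IsPrime := hp.1.1
  by_contra hcon
  push Not at hcon
  obtain ⟨q, hq, hIq, hd⟩ := Ideal.exists_le_prime_disjoint I (p.primeCompl ⊔ Submonoid.powers y) (by
    rw [Set.disjoint_left]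
    intro x hx hx'
    obtain ⟨s, hs, _, ⟨a, rfl⟩, rfl⟩ := Submonoid.mem_sup.1 hx'
    exact hcon s hs a hx)
  rw [Set.disjoint_left] at hd
  have hqp : q ≤ p := by
    intro x hx
    by_contra hxp
    exact hd hx ((le_sup_left : p.primeCompl ≤ _) hxp)
  exact hd (hp.2 ⟨hq, hIq⟩ hqp hy) ((le_sup_right : Submonoid.powers y ≤ p.primeCompl ⊔ _)
    (Submonoid.mem_powers y))

/-- localized short exact sequence -/
theorem loc_ses {A B C : Type u} [AddCommGroup A] [Module R A] [AddCommGroup B] [Module R B]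
    [AddCommGroup C] [Module R C] {f : A →ₗ[R] B} {g : B →ₗ[R] C} (s : IsSES f g) :
    IsSES (LocalizedModule.map W f) (LocalizedModule.map W g) := by
  have he : Function.Exact f g := fun b => by simpa [Set.mem_range] using s.iff b
  refine IsSES.mk' (LocalizedModule.map_injective W f s.inj)
    (LocalizedModule.map_surjective W g s.surj) ?_
  intro b
  exact LocalizedModule.map_exact W f g he b

theorem loc_Fac {M : Type u} [AddCommGroup M] [Module R M] {r : R} (h : Fac (projC R) r M) :
    Fac (projC (Localization W)) (algebraMap R (Localization W) r) (LocalizedModule W M) := by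
  obtain ⟨X, _, _, i, j, hX, hij⟩ := h.elim
  have : Module.Finite R X := hX.1
  have : Module.Projective R X := hX.2
  have hc : j ∘ₗ i = r • LinearMap.id := LinearMap.ext hij
  refine Fac.mk (X := LocalizedModule W X) ⟨?_, ?_⟩ (LocalizedModule.map W i) (LocalizedModule.map W j) ?_
  · change Module.Finite _ (LocalizedModule W X)
    infer_instance
  · exact Module.projective_of_isLocalizedModule W (LocalizedModule.mkLinearMap W X)
  · intro m
    induction m using LocalizedModule.induction_on with
    | h m s =>
    rw [LocalizedModule.map_mk, LocalizedModule.map_mk, hij, algebraMap_smul, LocalizedModule.smul'_mk]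

theorem loc_LF [IsNoetherianRing R] {I p : Ideal R} [p.IsPrime] (hp : p ∈ I.minimalPrimes) {M : Type u} [AddCommGroup M]
    [Module R M] [Module.Finite R M] (hI : I ≤ (sAnn R M).radical) :
    In (LF (Localization.AtPrime p)) (LocalizedModule p.primeCompl M) := by
  rw [mem_LF]
  intro y hy
  obtain ⟨⟨z, w⟩, hz⟩ := IsLocalization.surj p.primeCompl y
  have hzp : z ∈ p := by
    rw [← IsLocalization.AtPrime.to_map_mem_maximal_iff (Localization.AtPrime p) p, ← hz]
    exact Ideal.mul_mem_right _ _ hy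
  obtain ⟨s, hs, a, hsa⟩ := minPrime_pow hp hzp
  obtain ⟨b, hb⟩ := hI hsa
  refine ⟨a * b, ?_⟩
  have h1 := loc_Fac (W := p.primeCompl) (mem_sAnn.1 hb)
  obtain ⟨c, hc⟩ := IsLocalization.map_units (Localization.AtPrime p) (⟨s, hs⟩ : p.primeCompl)
  obtain ⟨d, hd⟩ := IsLocalization.map_units (Localization.AtPrime p) w
  dsimp only at hz hc
  have := h1.mul ((↑c⁻¹ : Localization.AtPrime p) ^ b * (↑d⁻¹) ^ (a * b))
  rw [map_pow, map_mul, map_pow, ← hc, ← hz, ← hd] at this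
  convert this using 1
  have e1 : (↑c⁻¹ : Localization.AtPrime p) * ↑c = 1 := c.inv_mul
  have e2 : (↑d⁻¹ : Localization.AtPrime p) * ↑d = 1 := d.inv_mul
  calc y ^ (a * b) = ((↑c⁻¹ : Localization.AtPrime p) * ↑c) ^ b * ((↑d⁻¹ : Localization.AtPrime p) * ↑d) ^ (a * b)
        * y ^ (a * b) := by rw [e1, e2]; simp
    _ = _ := by rw [pow_mul y, pow_mul, pow_mul]; ring

end Loc
end ResolvPaper

namespace ResolvPaper

section Global

variable {R : Type u} [CommRing R] [IsNoetherianRing R] {𝒳 : Set (ModuleCat.{u} R)}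

theorem le_localDepth_iff (p : PrimeSpectrum R) (M : Type u) [AddCommGroup M] [Module R M]
    [Module.Finite R M] (t : ℕ) : (t : ℕ∞) ≤ localDepth R p (.of R M) ↔
      Dge (S := Localization.AtPrime p.asIdeal) t (LocalizedModule p.asIdeal.primeCompl M) := by
  have : Module.Finite (Localization.AtPrime p.asIdeal) (LocalizedModule p.asIdeal.primeCompl M) :=
    inferInstance
  exact le_depthE_iff t

theorem global_step (h : IsResolving R 𝒳) (p : PrimeSpectrum R) {I : Ideal R}
    (hp : p.asIdeal ∈ I.minimalPrimes) {M : Type u} [AddCommGroup M] [Module R M]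
    [Module.Finite R M] (hI : I ≤ (sAnn R M).radical)
    (hdom : ∃ n, In (TT (LY 𝒳 p.asIdeal.primeCompl) n)
      (IsLocalRing.ResidueField (Localization.AtPrime p.asIdeal)))
    (hdep : ∀ t : ℕ, (t : ℕ∞) ≤ ⨅ X ∈ 𝒳, localDepth R p X →
      Dge (S := Localization.AtPrime p.asIdeal) t (LocalizedModule p.asIdeal.primeCompl M)) :
    ∃ r ∉ p.asIdeal, Fac 𝒳 r M := by
  obtain ⟨n, hn⟩ := hdom
  have hr := LY.resolving (W := p.asIdeal.primeCompl) h
  have key : In (LY 𝒳 p.asIdeal.primeCompl) (LocalizedModule p.asIdeal.primeCompl M) := by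
    refine local_main hr hn (loc_LF hp hI) ?_
    by_contra hcon
    push Not at hcon
    obtain ⟨⟨t0, ht0⟩, h2⟩ := hcon
    refine ht0 ?_
    have : ∀ t, Dge (S := Localization.AtPrime p.asIdeal) t
        (LocalizedModule p.asIdeal.primeCompl M) := by
      intro t
      induction t with
      | zero => intro i hi; omega
      | succ t ih =>
        refine hdep (t+1) (le_iInf₂ fun X hX => ?_)
        have hXf : Module.Finite R X := h.fg X hX
        refine (le_localDepth_iff p X (t+1)).2 ?_
        exact h2 t ih (ModuleCat.of _ (LocalizedModule p.asIdeal.primeCompl X))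
          (T2 (LocalizedModule.mkLinearMap _ _) (sub_locW h _ hX))
    exact this t0
  obtain ⟨_, r, hr, hf⟩ := T1 (LocalizedModule.mkLinearMap p.asIdeal.primeCompl M) key
  exact ⟨r, hr, hf⟩

theorem global_main (h : IsResolving R 𝒳) (I : Ideal R) :
    ∀ (M : Type u) [AddCommGroup M] [Module R M] [Module.Finite R M],
    I ≤ (sAnn R M).radical →
    (∀ p : PrimeSpectrum R, I ≤ p.asIdeal → ∃ n, In (TT (LY 𝒳 p.asIdeal.primeCompl) n)
      (IsLocalRing.ResidueField (Localization.AtPrime p.asIdeal))) →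
    (∀ p : PrimeSpectrum R, I ≤ p.asIdeal → ∀ t : ℕ, (t : ℕ∞) ≤ ⨅ X ∈ 𝒳, localDepth R p X →
      Dge (S := Localization.AtPrime p.asIdeal) t (LocalizedModule p.asIdeal.primeCompl M)) →
    In 𝒳 M := by
  induction I using IsNoetherian.induction with
  | hgt I ih =>
    intro M _ _ _ hI hdom hdep
    by_cases htop : I = ⊤
    · have h1 : (1 : R) ∈ (sAnn R M).radical := hI (htop ▸ trivial)
      have h2 : (1 : R) ∈ sAnn R M := by
        obtain ⟨n, hn⟩ := h1
        simpa using hn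
      obtain ⟨X, _, _, i, j, hX, hij⟩ := (mem_sAnn.1 h2).elim
      exact h.retract i j (by simpa using hij) (h.projC_sub hX)
    · obtain ⟨m, hm, hIm⟩ := Ideal.exists_le_maximal I htop
      have := hm.isPrime
      obtain ⟨p, hp, -⟩ := Ideal.exists_minimalPrimes_le hIm
      have hpp : p.IsPrime := hp.1.1
      obtain ⟨r, hr, hf⟩ := global_step h ⟨p, hpp⟩ hp hI (hdom _ hp.1.2) (hdep _ hp.1.2)
      change r ∉ p at hr
      obtain ⟨n, π, hπ⟩ := exists_cover (R := R) M
      have : Module.Finite R (pb π r) := inferInstance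
      refine h.of_pb hπ hf (ih (I ⊔ Ideal.span {r}) ?_ (pb π r) ?_ ?_ ?_)
      · refine lt_of_le_of_ne le_sup_left fun heq => hr (hp.1.2 ?_)
        rw [heq]
        exact Ideal.mem_sup_right (Ideal.mem_span_singleton_self r)
      · exact (sup_le_sup_right hI _).trans (pb_sAnn π hπ r)
      · exact fun q hq => hdom q (le_sup_left.trans hq)
      · intro q hq t ht
        have hM := hdep q (le_sup_left.trans hq) t ht
        have hF : Dge (S := Localization.AtPrime q.asIdeal) t
            (LocalizedModule q.asIdeal.primeCompl (Fin n → R)) := by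
          rw [← le_localDepth_iff q (Fin n → R) t]
          exact ht.trans (iInf₂_le (ModuleCat.of R (Fin n → R)) (h.proj : In 𝒳 (Fin n → R)))
        have hK := Dge.left' (loc_ses (W := q.asIdeal.primeCompl) (ker_ses π hπ)) hF hM
        exact Dge.mid (loc_ses (W := q.asIdeal.primeCompl) (pb_ses (ker_ses π hπ) r)) hK hM

theorem mem_NF_of_le {M : Type u} [AddCommGroup M] [Module R M] [Module.Finite R M]
    {p : PrimeSpectrum R} (hp : sAnn R M ≤ p.asIdeal) : p ∈ NF R (.of R M) := by
  intro hfree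
  have hfree' : Module.Free (Localization.AtPrime p.asIdeal)
    (LocalizedModule p.asIdeal.primeCompl M) := hfree
  obtain ⟨_, r, hr, hf⟩ := T1 (𝒳 := projC R) (W := p.asIdeal.primeCompl)
    (LocalizedModule.mkLinearMap p.asIdeal.primeCompl M)
    (LY.proj (W := p.asIdeal.primeCompl) projC.resolving)
  exact hr (hp hf)

theorem main_aux (h𝒳 : IsResolving R 𝒳)
    (M : ModuleCat.{u} R) (hM : Module.Finite R M)
    (hdom : DominantOn R 𝒳 (NF R M)) :
    M ∈ 𝒳 ↔ ∀ p ∈ NF R M, (⨅ X ∈ 𝒳, localDepth R p X) ≤ localDepth R p M := by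
  constructor
  · intro h p _
    exact iInf₂_le M h
  · intro h
    refine global_main h𝒳 (sAnn R M) M Ideal.le_radical ?_ ?_
    · intro p hp
      obtain ⟨n, K, hK, hK'⟩ := hdom p (mem_NF_of_le hp)
      exact ⟨n, minSyz_TT (LY.resolving h𝒳) n _ K hK (addLocal_LY h𝒳 hK')⟩
    · intro p hp t ht
      exact (le_localDepth_iff p M t).1 (ht.trans (h p (mem_NF_of_le hp)))

end Global
end ResolvPaper

namespace ResolvPaper

variable (R : Type u) [CommRing R]

/-- Theorem (g): over a Cohen-Macaulay ring, a module `M` belongs to a resolving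
subcategory `𝒳` which is dominant on `NF(M)` iff
`depth M_p ≥ min_{X ∈ 𝒳} depth X_p` for all `p ∈ NF(M)`. -/
theorem mem_dominant_resolving_iff_depth [IsNoetherianRing R]
    (hCM : ∀ p : PrimeSpectrum R, IsCMLocalRing (Localization.AtPrime p.asIdeal))
    (𝒳 : Set (ModuleCat.{u} R)) (h𝒳 : IsResolving R 𝒳)
    (M : ModuleCat.{u} R) (hM : Module.Finite R M)
    (hdom : DominantOn R 𝒳 (NF R M)) :
    M ∈ 𝒳 ↔ ∀ p ∈ NF R M, (⨅ X ∈ 𝒳, localDepth R p X) ≤ localDepth R p M := by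
  exact main_aux h𝒳 M hM hdom

end ResolvPaper
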